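/- arXiv:1007.0511 — 3 statements merged into one kernel-verified Lean document; each statement's English description precedes it below -/
import Mathlib

section
/- Let P be a d-dimensional polytope, S a polyhedral decomposition of P, and σ a proper (possibly empty) face of P that is a face of S. Then for any (possibly empty) face σ' of σ, the sum of (−1)^{dim τ} over all faces τ of S whose relative interior lies in the relative interior of P and which satisfy τ ∩ σ = σ', equals (−1)^d if σ' = σ, and 0 otherwise. -/
open scoped Classical

/-- A polytope in Euclidean space: the convex hull of a finite set. -/
def IsPolytope {n : ℕ} (P : Set (EuclideanSpace ℝ (Fin n))) : Prop :=
  ∃ V : Finset (EuclideanSpace ℝ (Fin n)), P = convexHull ℝ (V : Set (EuclideanSpace ℝ (Fin n)))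

/-- The dimension of a nonempty subset of Euclidean space: the dimension of its affine hull. -/
noncomputable def pdim {n : ℕ} (s : Set (EuclideanSpace ℝ (Fin n))) : ℕ :=
  Module.finrank ℝ (vectorSpan ℝ s)

/-- A (finite) polyhedral decomposition of a set `P`: a finite complex of nonempty polytopes,
closed under taking nonempty faces, in which any two cells intersect in a (possibly empty) face
of each, and whose union is `P`. -/
structure PolyDecomp (n : ℕ) (P : Set (EuclideanSpace ℝ (Fin n))) where
  cells : Finset (Set (EuclideanSpace ℝ (Fin n)))
  nonempty : ∀ C ∈ cells, C.Nonempty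
  polytope : ∀ C ∈ cells, IsPolytope C
  face_mem : ∀ C ∈ cells, ∀ F : Set (EuclideanSpace ℝ (Fin n)),
    IsExposed ℝ C F → F.Nonempty → F ∈ cells
  inter_face : ∀ C ∈ cells, ∀ D ∈ cells, IsExposed ℝ C (C ∩ D)
  cover : ⋃₀ (cells : Set (Set (EuclideanSpace ℝ (Fin n)))) = P

/-!
The relative interiors of the interior cells partition the relative interior of `P`. The Euler
characteristic with compact support, `(-1) ^ dim U` for a relatively open convex set `U`, is
additive for such partitions into bounded pieces: slice by a linear functional `l`. The jumps from
the right of the Euler characteristic of the slices add up to the Euler characteristic of the whole,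
and the slices have smaller dimension.

Intersecting the partition with a small ball around a relative interior point of a cell `F` leaves
only the interior cells containing `F`, so `∑ τ ⊇ F, (-1) ^ dim τ = (-1) ^ d`; for `F = ∅` no ball
is needed. For `F ⊆ σ`, grouping these `τ` by `τ ∩ σ ⊇ F` gives a triangular linear system whose
right-hand side is constant, and its only solution is concentrated at `σ`.
-/

open Set Filter Topology

section IntrinsicInterior

variable {E : Type*} [NormedAddCommGroup E] [NormedSpace ℝ E] {C D F : Set E} {x y v : E}

/-- The translate of `C` by `-x`, as a subset of the direction of the affine span of `C`. For
`x ∈ C` it transfers topological facts about the ambient vector space to intrinsic interiors. -/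
def translateInDirection (C : Set E) (x : E) : Set (affineSpan ℝ C).direction :=
  {w | (w : E) + x ∈ C}

theorem add_mem_intrinsicInterior_iff (hx : x ∈ C) (w : (affineSpan ℝ C).direction) :
    (w : E) + x ∈ intrinsicInterior ℝ C ↔ w ∈ interior (translateInDirection C x) := by
  let p : affineSpan ℝ C := ⟨x, subset_affineSpan ℝ C hx⟩
  have : Nonempty (affineSpan ℝ C) := ⟨p⟩
  let e := (AffineIsometryEquiv.vaddConst ℝ p).toHomeomorph
  have hpre : translateInDirection C x = e ⁻¹' ((↑) ⁻¹' C) := rfl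
  rw [hpre, ← e.preimage_interior]
  exact Subtype.val_injective.mem_set_image (a := e w)

theorem convex_translateInDirection (hC : Convex ℝ C) (x : E) :
    Convex ℝ (translateInDirection C x) :=
  (hC.translate_preimage_left x).linear_preimage (affineSpan ℝ C).direction.subtype

theorem eventually_add_smul_mem_intrinsicInterior (hx : x ∈ intrinsicInterior ℝ C)
    (hv : v ∈ vectorSpan ℝ C) : ∀ᶠ ε : ℝ in 𝓝[>] 0, x + ε • v ∈ intrinsicInterior ℝ C := by
  rw [← direction_affineSpan] at hv
  have hxC := intrinsicInterior_subset hx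
  have hcont : Continuous fun ε : ℝ => ε • (⟨v, hv⟩ : (affineSpan ℝ C).direction) := by fun_prop
  have h0 : (0 : (affineSpan ℝ C).direction) ∈ interior (translateInDirection C x) := by
    simpa [← add_mem_intrinsicInterior_iff hxC] using hx
  have hmem := hcont.continuousAt.preimage_mem_nhds (x := 0)
    (isOpen_interior.mem_nhds (by simpa using h0))
  filter_upwards [nhdsWithin_le_nhds hmem] with ε hε
  rw [add_comm]
  exact (add_mem_intrinsicInterior_iff hxC (ε • ⟨v, hv⟩)).2 hε

theorem exists_add_smul_sub_mem_of_mem_intrinsicInterior (hx : x ∈ intrinsicInterior ℝ C)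
    (hy : y ∈ C) : ∃ ε : ℝ, 0 < ε ∧ x + ε • (x - y) ∈ intrinsicInterior ℝ C :=
  ((eventually_mem_nhdsWithin).and (eventually_add_smul_mem_intrinsicInterior hx
    (vsub_mem_vectorSpan ℝ (intrinsicInterior_subset hx) hy))).exists

theorem mem_openSegment_add_smul_sub {ε : ℝ} (hε : 0 < ε) :
    x ∈ openSegment ℝ y (x + ε • (x - y)) := by
  refine ⟨ε / (1 + ε), 1 / (1 + ε), by positivity, by positivity, by field_simp; ring, ?_⟩
  match_scalars <;> field_simp
  ring

theorem eq_of_isExtreme_of_mem_intrinsicInterior (hF : IsExtreme ℝ C F) (hxF : x ∈ F)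
    (hx : x ∈ intrinsicInterior ℝ C) : F = C := by
  refine hF.subset.antisymm fun y hy => ?_
  obtain ⟨ε, hε, hz⟩ := exists_add_smul_sub_mem_of_mem_intrinsicInterior hx hy
  exact hF.left_mem_of_mem_openSegment hy (intrinsicInterior_subset hz) hxF
    (mem_openSegment_add_smul_sub hε)

theorem eq_of_forall_le_of_mem_intrinsicInterior (l : StrongDual ℝ E)
    (hx : x ∈ intrinsicInterior ℝ C) (hl : ∀ y ∈ C, l y ≤ l x) (hy : y ∈ C) : l y = l x := by
  have hface : l.toExposed C = C := eq_of_isExtreme_of_mem_intrinsicInterior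
    ContinuousLinearMap.toExposed.isExposed.isExtreme ⟨intrinsicInterior_subset hx, hl⟩ hx
  have hy' : y ∈ l.toExposed C := hface.symm ▸ hy
  exact (hl y hy).antisymm (hy'.2 x (intrinsicInterior_subset hx))

variable [FiniteDimensional ℝ E]

theorem interior_translateInDirection_nonempty (hC : Convex ℝ C) (hx : x ∈ C) :
    (interior (translateInDirection C x)).Nonempty := by
  obtain ⟨y, hy⟩ := Set.Nonempty.intrinsicInterior hC ⟨x, hx⟩
  have hyx : y - x ∈ (affineSpan ℝ C).direction := by
    rw [direction_affineSpan]
    exact vsub_mem_vectorSpan ℝ (intrinsicInterior_subset hy) hx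
  exact ⟨⟨y - x, hyx⟩, (add_mem_intrinsicInterior_iff hx _).1 (by simpa using hy)⟩

theorem exists_forall_le_exists_lt_of_notMem_intrinsicInterior (hC : Convex ℝ C) (hx : x ∈ C)
    (hxi : x ∉ intrinsicInterior ℝ C) :
    ∃ l : StrongDual ℝ E, (∀ y ∈ C, l y ≤ l x) ∧ ∃ y ∈ C, l y < l x := by
  have h0 : (0 : (affineSpan ℝ C).direction) ∉ interior (translateInDirection C x) := by
    simpa [← add_mem_intrinsicInterior_iff hx] using hxi
  obtain ⟨f, hf0, hf⟩ := geometric_hahn_banach_of_nonempty_interior_point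
    (convex_translateInDirection hC x) h0 (interior_translateInDirection_nonempty hC hx)
  obtain ⟨g, hgf⟩ := LinearMap.exists_extend f.toLinearMap
  have hg (w : (affineSpan ℝ C).direction) : g w = f w := LinearMap.congr_fun hgf w
  have hle : ∀ y ∈ C, g y ≤ g x := fun y hy => by
    have hyx : y - x ∈ (affineSpan ℝ C).direction := by
      rw [direction_affineSpan]
      exact vsub_mem_vectorSpan ℝ hy hx
    have := hf ⟨y - x, hyx⟩ (by simpa [translateInDirection] using hy)
    simpa [← hg] using this
  refine ⟨g.toContinuousLinearMap, hle, ?_⟩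
  by_contra! hge
  have hker : (affineSpan ℝ C).direction ≤ g.ker := by
    rw [direction_affineSpan, vectorSpan_eq_span_vsub_set_right ℝ hx, Submodule.span_le]
    rintro _ ⟨y, hy, rfl⟩
    simpa [sub_eq_zero] using (hle y hy).antisymm (hge y hy)
  exact hf0 (ContinuousLinearMap.ext fun w => by simpa [← hg] using hker w.2)

theorem openSegment_subset_intrinsicInterior (hC : Convex ℝ C) (hx : x ∈ intrinsicInterior ℝ C)
    (hy : y ∈ C) : openSegment ℝ x y ⊆ intrinsicInterior ℝ C := by
  rintro z ⟨a, b, ha, hb, hab, rfl⟩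
  by_contra hz
  have hxC := intrinsicInterior_subset hx
  obtain ⟨l, hl, w, hw, hlw⟩ := exists_forall_le_exists_lt_of_notMem_intrinsicInterior hC
    (hC hxC hy ha.le hb.le hab) hz
  have hlx : l (a • x + b • y) ≤ l x := by
    have hly := hl y hy
    obtain rfl : b = 1 - a := by linarith
    simp only [map_add, map_smul, smul_eq_mul] at hly ⊢
    nlinarith
  have hmax : ∀ u ∈ C, l u ≤ l x := fun u hu => (hl u hu).trans hlx
  have hlw' := eq_of_forall_le_of_mem_intrinsicInterior l hx hmax hw
  exact (hlw.trans_le hlx).ne hlw'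

theorem convex_intrinsicInterior (hC : Convex ℝ C) : Convex ℝ (intrinsicInterior ℝ C) :=
  convex_iff_openSegment_subset.2 fun _ hx _ hy =>
    openSegment_subset_intrinsicInterior hC hx (intrinsicInterior_subset hy)

theorem subset_closure_intrinsicInterior (hC : Convex ℝ C) :
    C ⊆ closure (intrinsicInterior ℝ C) := by
  intro x hx
  obtain ⟨y, hy⟩ := Set.Nonempty.intrinsicInterior hC ⟨x, hx⟩
  refine closure_mono (openSegment_subset_intrinsicInterior hC hy hx) ?_
  rw [closure_openSegment]
  exact right_mem_segment ℝ y x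

theorem intrinsicInterior_inter_nonempty_iff (hC : Convex ℝ C) {B : Set E} (hB : IsOpen B) :
    (intrinsicInterior ℝ C ∩ B).Nonempty ↔ (C ∩ B).Nonempty := by
  refine ⟨.mono (inter_subset_inter_left B intrinsicInterior_subset), fun h => ?_⟩
  rw [← closure_inter_open_nonempty_iff hB]
  exact h.mono (inter_subset_inter_left B (subset_closure_intrinsicInterior hC))

theorem intrinsicInterior_subset_intrinsicInterior_of_inter_nonempty (hD : Convex ℝ D)
    (hCD : C ⊆ D) (hne : (intrinsicInterior ℝ C ∩ intrinsicInterior ℝ D).Nonempty) :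
    intrinsicInterior ℝ C ⊆ intrinsicInterior ℝ D := by
  intro y hy
  obtain ⟨x, hxC, hxD⟩ := hne
  obtain ⟨ε, hε, hz⟩ :=
    exists_add_smul_sub_mem_of_mem_intrinsicInterior hy (intrinsicInterior_subset hxC)
  exact openSegment_subset_intrinsicInterior hD hxD (hCD (intrinsicInterior_subset hz))
    (mem_openSegment_add_smul_sub hε)

theorem subset_intrinsicInterior_of_forall_exists_add_smul_sub_mem (hC : Convex ℝ C)
    (h : ∀ x ∈ C, ∀ y ∈ C, ∃ ε : ℝ, 0 < ε ∧ x + ε • (x - y) ∈ C) :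
    C ⊆ intrinsicInterior ℝ C := by
  intro x hx
  by_contra hxi
  obtain ⟨l, hl, y, hy, hlt⟩ := exists_forall_le_exists_lt_of_notMem_intrinsicInterior hC hx hxi
  obtain ⟨ε, hε, hz⟩ := h x hx y hy
  have hle := hl _ hz
  simp only [map_add, map_smul, map_sub, smul_eq_mul] at hle
  nlinarith

end IntrinsicInterior

section RelOpenConvex

variable {E : Type*} [NormedAddCommGroup E] [NormedSpace ℝ E]

/-- A convex set which is open in its affine span: the pieces into which a polyhedral complex
decomposes the set it covers. -/
structure IsRelOpenConvex (U : Set E) : Prop where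
  convex : Convex ℝ U
  subset_intrinsicInterior : U ⊆ intrinsicInterior ℝ U

theorem le_vectorSpan_of_forall_exists_add_smul_mem {U : Set E} {x : E} (hx : x ∈ U)
    {W : Submodule ℝ E} (h : ∀ v ∈ W, ∃ ε : ℝ, 0 < ε ∧ x + ε • v ∈ U) : W ≤ vectorSpan ℝ U := by
  intro v hv
  obtain ⟨ε, hε, hmem⟩ := h v hv
  have := vsub_mem_vectorSpan ℝ hmem hx
  rw [vsub_eq_sub, add_sub_cancel_left] at this
  exact (Submodule.smul_mem_iff _ hε.ne').1 this

theorem exists_add_smul_mem_intrinsicInterior_inter {B C : Set E} (hB : IsOpen B) {x v : E}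
    (hx : x ∈ intrinsicInterior ℝ C ∩ B) (hv : v ∈ vectorSpan ℝ C) :
    ∃ ε : ℝ, 0 < ε ∧ x + ε • v ∈ intrinsicInterior ℝ C ∩ B := by
  have hcont : Continuous fun ε : ℝ => x + ε • v := by fun_prop
  have hxB : ∀ᶠ ε : ℝ in 𝓝[>] 0, x + ε • v ∈ B := nhdsWithin_le_nhds
    (hcont.continuousAt.preimage_mem_nhds (hB.mem_nhds (by simpa using hx.2)))
  exact (eventually_mem_nhdsWithin.and
    ((eventually_add_smul_mem_intrinsicInterior hx.1 hv).and hxB)).exists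

theorem vectorSpan_intrinsicInterior_inter {B C : Set E} (hB : IsOpen B)
    (hne : (intrinsicInterior ℝ C ∩ B).Nonempty) :
    vectorSpan ℝ (intrinsicInterior ℝ C ∩ B) = vectorSpan ℝ C :=
  (vectorSpan_mono ℝ (inter_subset_left.trans intrinsicInterior_subset)).antisymm
    (le_vectorSpan_of_forall_exists_add_smul_mem hne.some_mem fun _ hv =>
      exists_add_smul_mem_intrinsicInterior_inter hB hne.some_mem hv)

theorem vectorSpan_inter_preimage_singleton_le (l : StrongDual ℝ E) (U : Set E) (t : ℝ) :
    vectorSpan ℝ (U ∩ l ⁻¹' {t}) ≤ vectorSpan ℝ U ⊓ l.toLinearMap.ker := by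
  refine le_inf (vectorSpan_mono ℝ inter_subset_left) (Submodule.span_le.2 ?_)
  rintro _ ⟨x, ⟨-, hx⟩, y, ⟨-, hy⟩, rfl⟩
  rw [mem_preimage, mem_singleton_iff] at hx hy
  simp [hx, hy]

theorem finrank_inf_ker_add_one {K V : Type*} [Field K] [AddCommGroup V] [Module K V]
    [FiniteDimensional K V] (W : Submodule K V) (f : V →ₗ[K] K) {v : V} (hv : v ∈ W)
    (hfv : f v ≠ 0) : Module.finrank K (W ⊓ f.ker : Submodule K V) + 1 = Module.finrank K W := by
  have hne : f.domRestrict W ≠ 0 := fun h => hfv (LinearMap.congr_fun h ⟨v, hv⟩)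
  have h := Module.Dual.finrank_ker_add_one_of_ne_zero hne
  rwa [LinearMap.ker_domRestrict, ← Submodule.finrank_map_subtype_eq,
    Submodule.map_comap_subtype] at h

theorem finrank_vectorSpan_inf_ker_add_one [FiniteDimensional ℝ E] (l : StrongDual ℝ E)
    {U : Set E} {y z : E} (hy : y ∈ U) (hz : z ∈ U) (hyz : l y ≠ l z) :
    Module.finrank ℝ (vectorSpan ℝ U ⊓ l.toLinearMap.ker : Submodule ℝ E) + 1 =
      Module.finrank ℝ (vectorSpan ℝ U) :=
  finrank_inf_ker_add_one _ _ (vsub_mem_vectorSpan ℝ hy hz) (by simpa [sub_eq_zero] using hyz)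

namespace IsRelOpenConvex

variable {U : Set E}

theorem exists_add_smul_mem (hU : IsRelOpenConvex U) {x v : E} (hx : x ∈ U)
    (hv : v ∈ vectorSpan ℝ U) : ∃ ε : ℝ, 0 < ε ∧ x + ε • v ∈ U :=
  (eventually_mem_nhdsWithin.and ((eventually_add_smul_mem_intrinsicInterior
    (hU.subset_intrinsicInterior hx) hv).mono fun _ h => intrinsicInterior_subset h)).exists

theorem vectorSpan_inter_preimage_singleton (hU : IsRelOpenConvex U) (l : StrongDual ℝ E) {t : ℝ}
    (ht : (U ∩ l ⁻¹' {t}).Nonempty) :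
    vectorSpan ℝ (U ∩ l ⁻¹' {t}) = vectorSpan ℝ U ⊓ l.toLinearMap.ker := by
  obtain ⟨x, hx⟩ := ht
  refine (vectorSpan_inter_preimage_singleton_le l U t).antisymm
    (le_vectorSpan_of_forall_exists_add_smul_mem hx ?_)
  rintro v ⟨hvU, hvl : l v = 0⟩
  obtain ⟨ε, hε, hmem⟩ := hU.exists_add_smul_mem hx.1 hvU
  exact ⟨ε, hε, hmem, by simpa [hvl] using hx.2⟩

theorem image_eq_Ioo (hU : IsRelOpenConvex U) (hb : Bornology.IsBounded U) (l : StrongDual ℝ E)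
    {y z : E} (hy : y ∈ U) (hz : z ∈ U) (hyz : l y ≠ l z) :
    l '' U = Ioo (sInf (l '' U)) (sSup (l '' U)) := by
  wlog hlt : l y < l z generalizing y z
  · exact this hz hy hyz.symm (lt_of_le_of_ne (not_lt.1 hlt) hyz.symm)
  have hbd : Bornology.IsBounded (l '' U) := l.lipschitz.isBounded_image hb
  have hshift {x p q : E} (hx : x ∈ U) (hp : p ∈ U) (hq : q ∈ U) :
      ∃ ε : ℝ, 0 < ε ∧ l x + ε * (l p - l q) ∈ l '' U := by
    obtain ⟨ε, hε, hmem⟩ := hU.exists_add_smul_mem hx (vsub_mem_vectorSpan ℝ hp hq)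
    exact ⟨ε, hε, _, hmem, by simp⟩
  refine Subset.antisymm ?_ ?_
  · rintro _ ⟨x, hx, rfl⟩
    obtain ⟨δ, hδ, hleft⟩ := hshift hx hy hz
    obtain ⟨ε, hε, hright⟩ := hshift hx hz hy
    constructor
    · exact (csInf_le hbd.bddBelow hleft).trans_lt (by nlinarith)
    · exact lt_of_lt_of_le (by nlinarith) (le_csSup hbd.bddAbove hright)
  · rintro t ⟨hinf, hsup⟩
    have hne : (l '' U).Nonempty := ⟨_, mem_image_of_mem l hy⟩
    obtain ⟨p, hp, hpt⟩ := exists_lt_of_csInf_lt hne hinf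
    obtain ⟨q, hq, hqt⟩ := exists_lt_of_lt_csSup hne hsup
    exact (hU.convex.linear_image l.toLinearMap).ordConnected.out hp hq ⟨hpt.le, hqt.le⟩

variable [FiniteDimensional ℝ E]

theorem inter_preimage_singleton (hU : IsRelOpenConvex U) (l : StrongDual ℝ E) (t : ℝ) :
    IsRelOpenConvex (U ∩ l ⁻¹' {t}) := by
  have hconv : Convex ℝ (U ∩ l ⁻¹' {t}) :=
    hU.convex.inter ((convex_singleton t).linear_preimage l.toLinearMap)
  refine ⟨hconv, subset_intrinsicInterior_of_forall_exists_add_smul_sub_mem hconv ?_⟩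
  rintro x ⟨hx, hxt⟩ y ⟨hy, hyt⟩
  obtain ⟨ε, hε, hmem⟩ := hU.exists_add_smul_mem hx (vsub_mem_vectorSpan ℝ hx hy)
  rw [mem_preimage, mem_singleton_iff] at hxt hyt
  exact ⟨ε, hε, hmem, by simp [hxt, hyt]⟩

theorem intrinsicInterior_inter {B C : Set E} (hC : Convex ℝ C) (hB : Convex ℝ B)
    (hBo : IsOpen B) : IsRelOpenConvex (intrinsicInterior ℝ C ∩ B) where
  convex := (convex_intrinsicInterior hC).inter hB
  subset_intrinsicInterior := by
    refine subset_intrinsicInterior_of_forall_exists_add_smul_sub_mem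
      ((convex_intrinsicInterior hC).inter hB) fun x hx y hy => ?_
    exact exists_add_smul_mem_intrinsicInterior_inter hBo hx (vsub_mem_vectorSpan ℝ
      (intrinsicInterior_subset hx.1) (intrinsicInterior_subset hy.1))

end IsRelOpenConvex

end RelOpenConvex

section EulerCharacteristic

variable {E : Type*} [NormedAddCommGroup E] [NormedSpace ℝ E]

/-- The Euler characteristic with compact support of a relatively open convex set. The empty set,
whose `vectorSpan` has dimension `0`, is treated apart. -/
noncomputable def relOpenEulerChar (U : Set E) : ℤ :=
  if U.Nonempty then (-1) ^ Module.finrank ℝ (vectorSpan ℝ U) else 0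

theorem relOpenEulerChar_of_nonempty {U : Set E} (hU : U.Nonempty) :
    relOpenEulerChar U = (-1) ^ Module.finrank ℝ (vectorSpan ℝ U) := if_pos hU

@[simp]
theorem relOpenEulerChar_empty : relOpenEulerChar (∅ : Set E) = 0 :=
  if_neg Set.not_nonempty_empty

@[simp]
theorem relOpenEulerChar_singleton (c : E) : relOpenEulerChar {c} = 1 := by
  rw [relOpenEulerChar_of_nonempty (singleton_nonempty c), vectorSpan_singleton, finrank_bot,
    pow_zero]

theorem sum_relOpenEulerChar_of_iUnion_eq_singleton {ι : Type*} {s : Finset ι} {U : ι → Set E}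
    {c : E} (hdisj : (s : Set ι).PairwiseDisjoint U) (hcover : ⋃ i ∈ s, U i = {c}) :
    ∑ i ∈ s, relOpenEulerChar (U i) = 1 := by
  have hsub : ∀ i ∈ s, U i ⊆ {c} := fun i hi => hcover ▸ subset_biUnion_of_mem (u := U) hi
  obtain ⟨i, hi, hci⟩ := mem_iUnion₂.1 (hcover.symm.subset (mem_singleton c))
  rw [Finset.sum_eq_single_of_mem i hi, (hsub i hi).antisymm (singleton_subset_iff.2 hci),
    relOpenEulerChar_singleton]
  intro j hj hji
  have hcj : c ∉ U j := fun h => (hdisj hj hi hji).notMem_of_mem_left h hci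
  rw [(subset_singleton_iff_eq.1 (hsub j hj)).resolve_right fun h => hcj (h ▸ rfl),
    relOpenEulerChar_empty]

theorem relOpenEulerChar_intrinsicInterior_inter [FiniteDimensional ℝ E] {B C : Set E}
    (hC : Convex ℝ C) (hB : IsOpen B) :
    relOpenEulerChar (intrinsicInterior ℝ C ∩ B) =
      if (C ∩ B).Nonempty then (-1) ^ Module.finrank ℝ (vectorSpan ℝ C) else 0 := by
  rw [relOpenEulerChar, intrinsicInterior_inter_nonempty_iff hC hB]
  split_ifs with hne
  · rw [vectorSpan_intrinsicInterior_inter hB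
      ((intrinsicInterior_inter_nonempty_iff hC hB).2 hne)]
  · rfl

theorem relOpenEulerChar_inter_preimage_singleton_of_image_eq (l : StrongDual ℝ E) {U : Set E}
    {c : ℝ} (hc : l '' U = {c}) (t : ℝ) :
    relOpenEulerChar (U ∩ l ⁻¹' {t}) = if t = c then relOpenEulerChar U else 0 := by
  have hlc : ∀ x ∈ U, l x = c := fun x hx => hc.subset (mem_image_of_mem l hx)
  split_ifs with h
  · have hsub : U ⊆ l ⁻¹' {t} := fun x hx => (hlc x hx).trans h.symm
    rw [inter_eq_left.2 hsub]
  · refine if_neg ?_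
    rintro ⟨x, hx, hxt⟩
    exact h (hxt.symm.trans (hlc x hx))

theorem eventually_nhdsGT_mem_Ioo_iff {a b t : ℝ} :
    ∀ᶠ u in 𝓝[>] t, u ∈ Ioo a b ↔ t ∈ Ico a b := by
  rcases lt_or_ge t a with ha | ha
  · filter_upwards [Ioo_mem_nhdsGT ha] with u hu
    simp [hu.2.not_gt, ha.not_ge]
  rcases lt_or_ge t b with hb | hb
  · filter_upwards [Ioo_mem_nhdsGT hb] with u hu
    simp [ha, hb, hu.2, ha.trans_lt hu.1]
  · filter_upwards [self_mem_nhdsWithin] with u hu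
    simp [hb.not_gt, (hb.trans (mem_Ioi.1 hu).le).not_gt]

variable [FiniteDimensional ℝ E]

theorem finrank_vectorSpan_inter_preimage_singleton_lt (l : StrongDual ℝ E) {U : Set E} {y z : E}
    (hy : y ∈ U) (hz : z ∈ U) (hyz : l y ≠ l z) (t : ℝ) :
    Module.finrank ℝ (vectorSpan ℝ (U ∩ l ⁻¹' {t})) < Module.finrank ℝ (vectorSpan ℝ U) := by
  rw [← finrank_vectorSpan_inf_ker_add_one l hy hz hyz, Nat.lt_succ_iff]
  exact Submodule.finrank_mono (vectorSpan_inter_preimage_singleton_le l U t)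

namespace IsRelOpenConvex

variable {U : Set E}

theorem relOpenEulerChar_inter_preimage_singleton (hU : IsRelOpenConvex U) (l : StrongDual ℝ E)
    {y z : E} (hy : y ∈ U) (hz : z ∈ U) (hyz : l y ≠ l z) (t : ℝ) :
    relOpenEulerChar (U ∩ l ⁻¹' {t}) = if t ∈ l '' U then -relOpenEulerChar U else 0 := by
  split_ifs with ht
  · have ht : (U ∩ l ⁻¹' {t}).Nonempty := ht
    rw [relOpenEulerChar_of_nonempty ht, relOpenEulerChar_of_nonempty ⟨y, hy⟩,
      hU.vectorSpan_inter_preimage_singleton l ht,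
      ← finrank_vectorSpan_inf_ker_add_one l hy hz hyz, pow_succ, mul_neg_one, neg_neg]
  · exact if_neg ht

/-- If `l` is not constant on `U`, its values form an open interval, over which the slices have
Euler characteristic `-relOpenEulerChar U`; the left end of that interval is the only jump from
the right. -/
theorem eventually_relOpenEulerChar_slice_sub (hU : IsRelOpenConvex U)
    (hb : Bornology.IsBounded U) (l : StrongDual ℝ E) (t : ℝ) :
    ∀ᶠ u in 𝓝[>] t, relOpenEulerChar (U ∩ l ⁻¹' {t}) - relOpenEulerChar (U ∩ l ⁻¹' {u}) =
      if t = sInf (l '' U) then relOpenEulerChar U else 0 := by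
  rcases U.eq_empty_or_nonempty with rfl | ⟨y, hy⟩
  · simp
  by_cases hconst : l '' U = {l y}
  · have hne : ∀ᶠ u in 𝓝[>] t, u ≠ l y := (nhdsGT_le_nhdsNE t).trans (nhdsNE_le_cofinite t)
      (finite_singleton (l y)).compl_mem_cofinite
    filter_upwards [hne] with u hu
    simp [relOpenEulerChar_inter_preimage_singleton_of_image_eq l hconst, hconst, hu]
  · obtain ⟨z, hz, hzy⟩ : ∃ z ∈ U, l z ≠ l y := by
      by_contra! h
      exact hconst (eq_singleton_iff_unique_mem.2 ⟨mem_image_of_mem l hy, by simpa using h⟩)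
    have himg := hU.image_eq_Ioo hb l hz hy hzy
    have hlt : sInf (l '' U) < sSup (l '' U) := by
      rw [← nonempty_Ioo, ← himg]
      exact ⟨_, mem_image_of_mem l hy⟩
    filter_upwards [eventually_nhdsGT_mem_Ioo_iff (a := sInf (l '' U)) (b := sSup (l '' U))]
      with u hu
    simp only [hU.relOpenEulerChar_inter_preimage_singleton l hz hy hzy]
    generalize sInf (l '' U) = a, sSup (l '' U) = b at *
    simp only [himg, hu]
    rcases lt_trichotomy t a with h | rfl | h
    · simp [h.not_gt, h.not_ge, h.ne]
    · simp [hlt]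
    · simp [h, h.le, h.ne']

end IsRelOpenConvex

theorem exists_forall_sum_relOpenEulerChar_slice_sub_eq (𝒰 : Finset (Set E))
    (hU : ∀ U ∈ 𝒰, IsRelOpenConvex U) (hb : ∀ U ∈ 𝒰, Bornology.IsBounded U)
    (l : StrongDual ℝ E) :
    ∃ (T : Finset ℝ) (u : ℝ → ℝ), ∀ U ∈ 𝒰,
      ∑ t ∈ T, (relOpenEulerChar (U ∩ l ⁻¹' {t}) - relOpenEulerChar (U ∩ l ⁻¹' {u t})) =
        relOpenEulerChar U := by
  have hjump (t : ℝ) := ((Finset.eventually_all 𝒰).2 fun U hUs =>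
    (hU U hUs).eventually_relOpenEulerChar_slice_sub (hb U hUs) l t).exists
  choose u hu using hjump
  refine ⟨𝒰.image fun U => sInf (l '' U), u, fun U hUs => ?_⟩
  rw [Finset.sum_congr rfl fun t _ => hu t U hUs, Finset.sum_ite_eq',
    if_pos (Finset.mem_image_of_mem _ hUs)]

theorem sum_relOpenEulerChar_eq_of_iUnion_eq {ι : Type*} {s : Finset ι} {U : ι → Set E}
    {V : Set E} (hU : ∀ i ∈ s, IsRelOpenConvex (U i)) (hV : IsRelOpenConvex V)
    (hb : Bornology.IsBounded V) (hdisj : (s : Set ι).PairwiseDisjoint U)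
    (hcover : ⋃ i ∈ s, U i = V) : ∑ i ∈ s, relOpenEulerChar (U i) = relOpenEulerChar V := by
  induction hd : Module.finrank ℝ (vectorSpan ℝ V) using Nat.strong_induction_on
    generalizing U V with
  | _ d ih =>
    have hsub : ∀ i ∈ s, U i ⊆ V := fun i hi => hcover ▸ subset_biUnion_of_mem (u := U) hi
    rcases V.subsingleton_or_nontrivial with hV1 | ⟨y, hy, z, hz, hyz⟩
    · rcases hV1.eq_empty_or_singleton with rfl | ⟨c, rfl⟩
      · exact (Finset.sum_eq_zero fun i hi => by simp [subset_empty_iff.1 (hsub i hi)]).trans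
          relOpenEulerChar_empty.symm
      · rw [sum_relOpenEulerChar_of_iUnion_eq_singleton hdisj hcover, relOpenEulerChar_singleton]
    · obtain ⟨l, hl⟩ := SeparatingDual.exists_separating_of_ne (R := ℝ) hyz
      have hslice (t : ℝ) : ∑ i ∈ s, relOpenEulerChar (U i ∩ l ⁻¹' {t}) =
          relOpenEulerChar (V ∩ l ⁻¹' {t}) :=
        ih _ (hd ▸ finrank_vectorSpan_inter_preimage_singleton_lt l hy hz hl t)
          (fun i hi => (hU i hi).inter_preimage_singleton l t) (hV.inter_preimage_singleton l t)
          (hb.subset inter_subset_left) (hdisj.mono fun _ => inter_subset_left)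
          (by rw [← hcover, iUnion₂_inter]) rfl
      obtain ⟨T, u, hT⟩ := exists_forall_sum_relOpenEulerChar_slice_sub_eq
        (insert V (s.image U)) (by simpa using ⟨hV, hU⟩)
        (by simpa using ⟨hb, fun i hi => hb.subset (hsub i hi)⟩) l
      rw [← hT V (by simp), Finset.sum_congr rfl fun i hi =>
        (hT (U i) (by simp [Finset.mem_image_of_mem U hi])).symm, Finset.sum_comm]
      simp only [Finset.sum_sub_distrib, hslice]

end EulerCharacteristic

section Moebius

theorem eqOn_of_forall_sum_filter_le_eq {α M : Type*} [PartialOrder α] [DecidableLE α]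
    [AddCancelCommMonoid M] {s : Finset α} {f g : α → M}
    (h : ∀ a ∈ s, ∑ b ∈ s with a ≤ b, f b = ∑ b ∈ s with a ≤ b, g b) : EqOn f g s := by
  intro a ha
  refine (s.finite_toSet.wellFoundedOn (r := (· > ·))).induction
    (P := fun a => f a = g a) ha fun a ha ih => ?_
  have hmem : a ∈ s.filter (a ≤ ·) := Finset.mem_filter.2 ⟨ha, le_rfl⟩
  have hsum := h a ha
  rw [← Finset.add_sum_erase _ f hmem, ← Finset.add_sum_erase _ g hmem] at hsum
  have habove : ∀ b ∈ (s.filter (a ≤ ·)).erase a, f b = g b := fun b hb => by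
    obtain ⟨hba, hbs, hab⟩ := by simpa only [Finset.mem_erase, Finset.mem_filter] using hb
    exact ih b hbs (lt_of_le_of_ne hab hba.symm)
  rw [Finset.sum_congr rfl habove] at hsum
  exact add_right_cancel hsum

end Moebius

section Decomposition

variable {n : ℕ} {P : Set (EuclideanSpace ℝ (Fin n))}

namespace IsPolytope

theorem convex (hP : IsPolytope P) : Convex ℝ P := by
  obtain ⟨V, rfl⟩ := hP
  exact convex_convexHull ℝ _

theorem isCompact (hP : IsPolytope P) : IsCompact P := by
  obtain ⟨V, rfl⟩ := hP
  exact V.finite_toSet.isCompact_convexHull ℝ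

end IsPolytope

namespace PolyDecomp

variable (S : PolyDecomp n P)

/-- The cells whose relative interior lies in the relative interior of `P`. -/
noncomputable def interiorCells : Finset (Set (EuclideanSpace ℝ (Fin n))) :=
  S.cells.filter fun τ => intrinsicInterior ℝ τ ⊆ intrinsicInterior ℝ P

/-- The cells of the decomposition together with the empty face. -/
noncomputable def faces : Finset (Set (EuclideanSpace ℝ (Fin n))) :=
  insert ∅ S.cells

variable {S} {τ ρ F σ : Set (EuclideanSpace ℝ (Fin n))} {x : EuclideanSpace ℝ (Fin n)}

theorem mem_cells_of_mem_interiorCells (hτ : τ ∈ S.interiorCells) : τ ∈ S.cells :=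
  (Finset.mem_filter.1 hτ).1

theorem convex_of_mem_cells (hτ : τ ∈ S.cells) : Convex ℝ τ := (S.polytope τ hτ).convex

theorem subset_of_mem_cells (hτ : τ ∈ S.cells) : τ ⊆ P :=
  S.cover ▸ subset_sUnion_of_mem hτ

theorem isBounded (S : PolyDecomp n P) : Bornology.IsBounded P := by
  rw [← S.cover]
  exact (Bornology.isBounded_sUnion S.cells.finite_toSet).2 fun τ hτ =>
    (S.polytope τ hτ).isCompact.isBounded

theorem inter_mem_faces (hτ : τ ∈ S.cells) (hσ : σ ∈ S.faces) : τ ∩ σ ∈ S.faces := by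
  rcases (τ ∩ σ).eq_empty_or_nonempty with hempty | hne
  · exact hempty ▸ Finset.mem_insert_self _ _
  · have hσ' := Finset.mem_of_mem_insert_of_ne hσ (hne.mono inter_subset_right).ne_empty
    exact Finset.mem_insert_of_mem (S.face_mem τ hτ _ (S.inter_face τ hτ σ hσ') hne)

theorem subset_of_mem_intrinsicInterior (hτ : τ ∈ S.cells) (hρ : ρ ∈ S.cells)
    (hx : x ∈ intrinsicInterior ℝ τ) (hxρ : x ∈ ρ) : τ ⊆ ρ :=
  inter_eq_left.1 (eq_of_isExtreme_of_mem_intrinsicInterior (S.inter_face τ hτ ρ hρ).isExtreme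
    ⟨intrinsicInterior_subset hx, hxρ⟩ hx)

variable (S) in
theorem pairwiseDisjoint_intrinsicInterior :
    (S.cells : Set (Set (EuclideanSpace ℝ (Fin n)))).PairwiseDisjoint (intrinsicInterior ℝ) := by
  refine fun τ hτ ρ hρ hne => disjoint_left.2 fun x hxτ hxρ => hne ?_
  exact (subset_of_mem_intrinsicInterior hτ hρ hxτ (intrinsicInterior_subset hxρ)).antisymm
    (subset_of_mem_intrinsicInterior hρ hτ hxρ (intrinsicInterior_subset hxτ))

variable (S) in
theorem exists_mem_intrinsicInterior (hx : x ∈ P) : ∃ τ ∈ S.cells, x ∈ intrinsicInterior ℝ τ := by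
  obtain ⟨τ₀, hτ₀, hxτ₀⟩ := S.cover.symm.subset hx
  obtain ⟨τ, hmin⟩ := Finset.exists_minimal (s := S.cells.filter fun τ => x ∈ τ)
    ⟨τ₀, Finset.mem_filter.2 ⟨hτ₀, hxτ₀⟩⟩
  obtain ⟨hτ, hxτ⟩ := Finset.mem_filter.1 hmin.prop
  refine ⟨τ, hτ, by_contra fun hxi => ?_⟩
  obtain ⟨l, hl, y, hy, hly⟩ :=
    exists_forall_le_exists_lt_of_notMem_intrinsicInterior (convex_of_mem_cells hτ) hxτ hxi
  have hxl : x ∈ l.toExposed τ := ⟨hxτ, hl⟩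
  have hface := S.face_mem τ hτ _ ContinuousLinearMap.toExposed.isExposed ⟨x, hxl⟩
  have hle := hmin.le_of_le (Finset.mem_filter.2 ⟨hface, hxl⟩) fun z hz => hz.1
  exact hly.not_ge ((hle hy).2 x hxτ)

variable (S) in
theorem iUnion_intrinsicInterior_interiorCells (hP : Convex ℝ P) :
    ⋃ τ ∈ S.interiorCells, intrinsicInterior ℝ τ = intrinsicInterior ℝ P := by
  refine Subset.antisymm (iUnion₂_subset fun τ hτ => (Finset.mem_filter.1 hτ).2) fun x hx => ?_
  obtain ⟨τ, hτ, hxτ⟩ := S.exists_mem_intrinsicInterior (intrinsicInterior_subset hx)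
  exact mem_iUnion₂.2 ⟨τ, Finset.mem_filter.2 ⟨hτ,
    intrinsicInterior_subset_intrinsicInterior_of_inter_nonempty hP (subset_of_mem_cells hτ)
      ⟨x, hxτ, hx⟩⟩, hxτ⟩

variable (S) in
theorem sum_interiorCells_inter_nonempty (hP : Convex ℝ P) {B : Set (EuclideanSpace ℝ (Fin n))}
    (hB : Convex ℝ B) (hBo : IsOpen B) (hne : (P ∩ B).Nonempty) :
    ∑ τ ∈ S.interiorCells with (τ ∩ B).Nonempty, (-1 : ℤ) ^ pdim τ = (-1) ^ pdim P := by
  have hcell {τ : Set (EuclideanSpace ℝ (Fin n))} (hτ : τ ∈ S.interiorCells) : Convex ℝ τ :=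
    convex_of_mem_cells (mem_cells_of_mem_interiorCells hτ)
  have hdisj := (S.pairwiseDisjoint_intrinsicInterior.subset fun _ =>
    mem_cells_of_mem_interiorCells).mono fun τ =>
      (inter_subset_left : intrinsicInterior ℝ τ ∩ B ⊆ intrinsicInterior ℝ τ)
  have hsum := sum_relOpenEulerChar_eq_of_iUnion_eq
    (fun τ hτ => IsRelOpenConvex.intrinsicInterior_inter (hcell hτ) hB hBo)
    (IsRelOpenConvex.intrinsicInterior_inter hP hB hBo)
    (S.isBounded.subset (inter_subset_left.trans intrinsicInterior_subset)) hdisj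
    (by rw [← iUnion₂_inter, S.iUnion_intrinsicInterior_interiorCells hP])
  rw [relOpenEulerChar_intrinsicInterior_inter hP hBo, if_pos hne, Finset.sum_congr rfl fun τ hτ =>
    relOpenEulerChar_intrinsicInterior_inter (hcell hτ) hBo, ← Finset.sum_filter] at hsum
  exact hsum

theorem exists_isOpen_convex_forall_inter_nonempty_iff (hF : F ∈ S.faces) :
    ∃ B : Set (EuclideanSpace ℝ (Fin n)), IsOpen B ∧ Convex ℝ B ∧
      ∀ τ ∈ S.cells, (τ ∩ B).Nonempty ↔ F ⊆ τ := by
  rcases Finset.mem_insert.1 hF with rfl | hF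
  · exact ⟨univ, isOpen_univ, convex_univ, fun τ hτ => by simpa using S.nonempty τ hτ⟩
  obtain ⟨x, hx⟩ := (S.nonempty F hF).intrinsicInterior (convex_of_mem_cells hF)
  have hnear : ∀ᶠ y in 𝓝 x, ∀ τ ∈ S.cells, y ∈ τ → x ∈ τ := by
    refine (Finset.eventually_all _).2 fun τ hτ => ?_
    by_cases hxτ : x ∈ τ
    · exact .of_forall fun _ _ => hxτ
    · filter_upwards [(S.polytope τ hτ).isCompact.isClosed.isOpen_compl.mem_nhds hxτ]
        with y hy hyτ using absurd hyτ hy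
  obtain ⟨r, hr, hball⟩ := Metric.eventually_nhds_iff_ball.1 hnear
  refine ⟨Metric.ball x r, Metric.isOpen_ball, convex_ball x r, fun τ hτ => ⟨?_, fun h => ?_⟩⟩
  · rintro ⟨y, hyτ, hyx⟩
    exact subset_of_mem_intrinsicInterior hF hτ hx (hball y hyx τ hτ hyτ)
  · exact ⟨x, h (intrinsicInterior_subset hx), Metric.mem_ball_self hr⟩

theorem sum_interiorCells_superset (hP : Convex ℝ P) (hne : P.Nonempty) (hF : F ∈ S.faces) :
    ∑ τ ∈ S.interiorCells with F ⊆ τ, (-1 : ℤ) ^ pdim τ = (-1) ^ pdim P := by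
  obtain ⟨B, hBo, hB, hiff⟩ := exists_isOpen_convex_forall_inter_nonempty_iff hF
  obtain ⟨τ, hτ, hFτ⟩ : ∃ τ ∈ S.cells, F ⊆ τ := by
    rcases Finset.mem_insert.1 hF with rfl | hF
    · obtain ⟨τ, hτ, -⟩ := S.exists_mem_intrinsicInterior hne.some_mem
      exact ⟨τ, hτ, empty_subset τ⟩
    · exact ⟨F, hF, Subset.rfl⟩
  have hPB : (P ∩ B).Nonempty :=
    ((hiff τ hτ).2 hFτ).mono (inter_subset_inter_left B (subset_of_mem_cells hτ))
  rw [← S.sum_interiorCells_inter_nonempty hP hB hBo hPB]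
  exact Finset.sum_congr (Finset.filter_congr fun τ hτ =>
    (hiff τ (mem_cells_of_mem_interiorCells hτ)).symm) fun _ _ => rfl

theorem sum_interiorCells_superset_eq_sum_inter_eq (hσ : σ ∈ S.faces) (hFσ : F ⊆ σ)
    (f : Set (EuclideanSpace ℝ (Fin n)) → ℤ) :
    ∑ τ ∈ S.interiorCells with F ⊆ τ, f τ =
      ∑ G ∈ S.faces.filter (· ⊆ σ) with F ≤ G, ∑ τ ∈ S.interiorCells with τ ∩ σ = G, f τ := by
  have hmaps : ∀ τ ∈ S.interiorCells.filter (F ⊆ ·),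
      τ ∩ σ ∈ (S.faces.filter (· ⊆ σ)).filter (F ≤ ·) := fun τ hτ => by
    obtain ⟨hτ, hFτ⟩ := Finset.mem_filter.1 hτ
    exact Finset.mem_filter.2 ⟨Finset.mem_filter.2
      ⟨inter_mem_faces (mem_cells_of_mem_interiorCells hτ) hσ, inter_subset_right⟩,
      subset_inter hFτ hFσ⟩
  rw [← Finset.sum_fiberwise_of_maps_to hmaps]
  refine Finset.sum_congr rfl fun G hG => ?_
  rw [Finset.filter_filter]
  refine Finset.sum_congr (Finset.filter_congr fun τ _ => and_iff_right_of_imp ?_) fun _ _ => rfl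
  rintro rfl
  exact (Finset.mem_filter.1 hG).2.trans inter_subset_left

end PolyDecomp

theorem mobius_sum_polyhedral_decomposition_general {n : ℕ} {P : Set (EuclideanSpace ℝ (Fin n))}
    (hP : Convex ℝ P) (hne : P.Nonempty) (S : PolyDecomp n P)
    (σ : Set (EuclideanSpace ℝ (Fin n))) (hσS : σ.Nonempty → σ ∈ S.cells)
    (σ' : Set (EuclideanSpace ℝ (Fin n))) :
    ∑ τ ∈ S.cells.filter
        (fun τ => intrinsicInterior ℝ τ ⊆ intrinsicInterior ℝ P ∧ τ ∩ σ = σ'),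
      (-1 : ℤ) ^ pdim τ = if σ' = σ then (-1 : ℤ) ^ pdim P else 0 := by
  have hσ : σ ∈ S.faces := Finset.mem_insert.2 (σ.eq_empty_or_nonempty.imp_right hσS)
  have hσσ : σ ∈ S.faces.filter (· ⊆ σ) := Finset.mem_filter.2 ⟨hσ, Subset.rfl⟩
  have heq := eqOn_of_forall_sum_filter_le_eq (s := S.faces.filter (· ⊆ σ))
    (f := fun F => ∑ τ ∈ S.interiorCells with τ ∩ σ = F, (-1 : ℤ) ^ pdim τ)
    (g := fun F => if F = σ then (-1 : ℤ) ^ pdim P else 0) fun F hF => by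
      obtain ⟨hF, hFσ⟩ := Finset.mem_filter.1 hF
      rw [← PolyDecomp.sum_interiorCells_superset_eq_sum_inter_eq hσ hFσ,
        PolyDecomp.sum_interiorCells_superset hP hne hF, Finset.sum_ite_eq',
        if_pos (Finset.mem_filter.2 ⟨hσσ, hFσ⟩)]
  rw [← Finset.filter_filter]
  by_cases hσ' : σ' ∈ S.faces.filter (· ⊆ σ)
  · exact heq hσ'
  · rw [if_neg (ne_of_mem_of_not_mem hσσ hσ').symm, Finset.sum_eq_zero]
    intro τ hτ
    obtain ⟨hτS, rfl⟩ := Finset.mem_filter.1 hτ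
    have hface := PolyDecomp.inter_mem_faces (PolyDecomp.mem_cells_of_mem_interiorCells hτS) hσ
    exact (hσ' (Finset.mem_filter.2 ⟨hface, inter_subset_right⟩)).elim

end Decomposition

/-- **(Lemma on Möbius-type sums over polyhedral decompositions.)**  Let `P` be a
`d`-dimensional polytope, `S` a polyhedral decomposition of `P`, and `σ` a proper (possibly
empty) face of `P` which is a face of `S`.  Then for any (possibly empty) face `σ'` of `σ`, the
sum of `(−1)^(dim τ)` over the cells `τ` of `S` whose relative interior lies in the relative
interior of `P` and which satisfy `τ ∩ σ = σ'` equals `(−1)^d` if `σ' = σ`, and `0`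
otherwise. -/
theorem mobius_sum_polyhedral_decomposition {n d : ℕ}
    (P : Set (EuclideanSpace ℝ (Fin n))) (hP : IsPolytope P) (hPd : pdim P = d)
    (S : PolyDecomp n P)
    (σ : Set (EuclideanSpace ℝ (Fin n))) (hσ : IsExposed ℝ P σ) (hσne : σ ≠ P)
    (hσS : σ.Nonempty → σ ∈ S.cells)
    (σ' : Set (EuclideanSpace ℝ (Fin n))) (hσ' : IsExposed ℝ σ σ') :
    ∑ τ ∈ S.cells.filter
        (fun τ => intrinsicInterior ℝ τ ⊆ intrinsicInterior ℝ P ∧ τ ∩ σ = σ'),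
      (-1 : ℤ) ^ pdim τ = if σ' = σ then (-1 : ℤ) ^ d else 0 := by
  subst hPd
  have hne : P.Nonempty := nonempty_iff_ne_empty.2 fun hP0 =>
    hσne (by subst hP0; exact subset_empty_iff.1 hσ.subset)
  exact mobius_sum_polyhedral_decomposition_general hP.convex hne S σ hσS σ'
end

section
/- Let P be a lattice polytope of dimension n in a lattice M, with Ehrhart polynomial f_P(m) = #(mP ∩ M). Then the generating series Σ_{m ≥ 0} f_P(m) t^m equals h*_P(t)/(1−t)^{n+1}, where h*_P(t) is a polynomial of degree at most n with nonnegative integer coefficients. -/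
open scoped Pointwise

/-!
Let `n = dim P`. The lattice points of the dilates `m • P` are the lattice points, at heights
`m = 0, 1, …`, of the cone of dimension `n + 1` spanned by the vectors `(1, v)`, for `v` in the
finite set of lattice points whose hull is `P`.

Give each generator a generic cost. Writing a point of the cone as a nonnegative combination of
generators at minimal cost is a linear program, and its optimal bases triangulate the cone into
simplicial cones. Displace points by a small positive multiple of a generic vector `q` of the cone:
each displaced point lies in the interior of a single simplicial cone, so each point is assigned to
exactly one of them, and the triangulation becomes a partition into half-open simplicial cones.

In a half-open simplicial cone, each lattice point is uniquely a lattice point of the half-open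
unit parallelepiped plus a combination of generators with coefficients in `ℕ`. As the generators
have height `1`, multiplication by `(1 - t) ^ (n + 1)` turns the series of the cone into the
polynomial counting the lattice points of the parallelepiped by height, whose coefficients are
nonnegative. The height of such a point is the sum of its `n + 1` coordinates, which are at most
`1`; as `q` lies in the cone, its coordinates are not all negative, so at least one coordinate of
the point is less than `1` and the height is at most `n`.
-/

section SmallPerturbations

open Filter Topology

theorem tendsto_add_mul_nhdsGT_zero (a b : ℝ) :
    Tendsto (fun ε : ℝ => a + ε * b) (𝓝[>] 0) (𝓝 a) :=
  ((continuous_const.add (continuous_mul_const b)).tendsto' 0 a (by simp)).mono_left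
    nhdsWithin_le_nhds

theorem eventually_pos_add_mul_iff (a : ℝ) {b : ℝ} (hb : b ≠ 0) :
    ∀ᶠ ε : ℝ in 𝓝[>] 0, 0 < a + ε * b ↔ 0 ≤ a ∧ (b < 0 → 0 < a) := by
  have hlim := tendsto_add_mul_nhdsGT_zero a b
  rcases lt_trichotomy a 0 with ha | rfl | ha
  · filter_upwards [hlim.eventually_lt_const ha] with ε hε
    exact ⟨fun h => absurd h hε.not_gt, fun h => absurd h.1 ha.not_ge⟩
  · filter_upwards [eventually_mem_nhdsWithin] with ε (hε : 0 < ε)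
    simp [hε, hb.symm.le_iff_lt]
  · filter_upwards [hlim.eventually_const_lt ha] with ε hε
    simp [hε, ha, ha.le]

theorem eventually_add_smul_notMem {E : Type*} [AddCommGroup E] [Module ℝ E] {S : Submodule ℝ E}
    {y : E} (hy : y ∉ S) (x : E) : ∀ᶠ ε : ℝ in 𝓝[>] 0, x + ε • y ∉ S := by
  have hsub : {ε : ℝ | x + ε • y ∈ S}.Subsingleton := fun ε hε δ hδ => by
    have hdiff := S.sub_mem hε hδ
    rw [add_sub_add_left_eq_sub, ← sub_smul] at hdiff
    by_contra hne
    exact hy ((S.smul_mem_iff (sub_ne_zero.2 hne)).1 hdiff)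
  exact ((nhdsGT_le_nhdsNE 0).trans (nhdsNE_le_cofinite 0)) hsub.finite.compl_mem_cofinite

end SmallPerturbations

section ConicCombinations

open Filter Topology
open Finsupp (linearCombination supported single)

variable {ι E : Type*} [AddCommGroup E] [Module ℝ E] {v : ι → E}

theorem mem_hull_range_iff_exists_nonneg {x : E} :
    x ∈ PointedCone.hull ℝ (Set.range v) ↔ ∃ c : ι →₀ ℝ, 0 ≤ c ∧ linearCombination ℝ v c = x := by
  constructor
  · intro hx
    obtain ⟨c, rfl⟩ := Finsupp.mem_span_range_iff_exists_finsupp.1 hx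
    refine ⟨c.mapRange (↑) rfl, fun i => (c i).2, ?_⟩
    rw [Finsupp.linearCombination_apply, Finsupp.sum_mapRange_index (by simp)]
    rfl
  · rintro ⟨c, hc, rfl⟩
    exact Submodule.sum_mem _ fun i _ =>
      PointedCone.smul_mem _ (hc i) (PointedCone.subset_hull ⟨i, rfl⟩)

theorem nonneg_of_mem_hull {ht : E →ₗ[ℝ] ℝ} (hht : ∀ i, 0 ≤ ht (v i)) {x : E}
    (hx : x ∈ PointedCone.hull ℝ (Set.range v)) : 0 ≤ ht x := by
  obtain ⟨c, hc, rfl⟩ := mem_hull_range_iff_exists_nonneg.1 hx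
  rw [Finsupp.apply_linearCombination, Finsupp.linearCombination_apply]
  exact Finset.sum_nonneg fun i _ => mul_nonneg (hc i) (hht i)

theorem exists_smul_le_of_exists_pos {c g : ι →₀ ℝ} (hc : 0 ≤ c) (hg : ∃ i, 0 < g i) :
    ∃ t : ℝ, 0 ≤ t ∧ t • g ≤ c ∧ ∃ j, 0 < g j ∧ t * g j = c j := by
  obtain ⟨i₀, hi₀⟩ := hg
  obtain ⟨j, hj, hmin⟩ := (g.support.filter (0 < g ·)).exists_min_image (fun i => c i / g i)
    ⟨i₀, by simpa using ⟨hi₀.ne', hi₀⟩⟩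
  replace hj : 0 < g j := (Finset.mem_filter.1 hj).2
  have ht : 0 ≤ c j / g j := div_nonneg (hc j) hj.le
  refine ⟨c j / g j, ht, fun i => ?_, j, hj, div_mul_cancel₀ _ hj.ne'⟩
  rcases lt_or_ge 0 (g i) with hi | hi
  · exact (le_div_iff₀ hi).1 (hmin i (by simpa using ⟨hi.ne', hi⟩))
  · exact (mul_nonpos_of_nonneg_of_nonpos ht hi).trans (hc i)

theorem exists_pos_smul_le {s : Finset ι} {a : ι → ℝ} (ha : ∀ i ∈ s, 0 < a i) (b : ι → ℝ) :
    ∃ t : ℝ, 0 < t ∧ ∀ i ∈ s, t * b i ≤ a i := by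
  have hsmall : ∀ i ∈ s, ∀ᶠ t : ℝ in 𝓝[>] 0, t * b i ≤ a i := fun i hi => by
    have hlim := tendsto_add_mul_nhdsGT_zero 0 (b i)
    simpa using hlim.eventually_le_const (ha i hi)
  exact (eventually_mem_nhdsWithin.and ((eventually_all_finset s).2 hsmall)).exists

theorem exists_pos_of_linearCombination_eq_zero {ht : E →ₗ[ℝ] ℝ} (hht : ∀ i, 0 < ht (v i))
    {g : ι →₀ ℝ} (hg : linearCombination ℝ v g = 0) (hne : g ≠ 0) : ∃ i, 0 < g i := by
  by_contra! hle
  obtain ⟨j, hj⟩ := Finsupp.ne_iff.1 hne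
  have hsum : g.sum (fun i a => a * ht (v i)) = 0 := by
    simpa [Finsupp.linearCombination_apply, map_finsuppSum] using congrArg ht hg
  refine hsum.not_lt (Finset.sum_neg' (fun i _ => ?_) ⟨j, Finsupp.mem_support_iff.2 hj, ?_⟩)
  · exact mul_nonpos_of_nonpos_of_nonneg (hle i) (hht i).le
  · exact mul_neg_of_neg_of_pos ((hle j).lt_of_ne hj) (hht j)

/-- Moving along a linear relation in the direction that does not increase the cost `ω` removes a
vector from the support. -/
theorem exists_card_support_lt_of_not_linearIndepOn {ht : E →ₗ[ℝ] ℝ} (hht : ∀ i, 0 < ht (v i))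
    (ω : ι → ℝ) {c : ι →₀ ℝ} (hc : 0 ≤ c) (hdep : ¬ LinearIndepOn ℝ v (c.support : Set ι)) :
    ∃ c' : ι →₀ ℝ, 0 ≤ c' ∧ linearCombination ℝ v c' = linearCombination ℝ v c ∧
      linearCombination ℝ ω c' ≤ linearCombination ℝ ω c ∧ c'.support.card < c.support.card := by
  obtain ⟨g, hgc, hg, hne, hωg⟩ : ∃ g ∈ supported ℝ ℝ (c.support : Set ι),
      linearCombination ℝ v g = 0 ∧ g ≠ 0 ∧ 0 ≤ linearCombination ℝ ω g := by
    simp only [linearIndepOn_iff, not_forall] at hdep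
    obtain ⟨g, hgc, hg, hne⟩ := hdep
    rcases le_total 0 (linearCombination ℝ ω g) with h | h
    · exact ⟨g, hgc, hg, hne, h⟩
    · exact ⟨-g, neg_mem hgc, by simp [hg], by simpa using hne, by simpa using h⟩
  obtain ⟨t, ht₀, hle, j, hj, hjc⟩ := exists_smul_le_of_exists_pos hc
    (exists_pos_of_linearCombination_eq_zero hht hg hne)
  refine ⟨c - t • g, sub_nonneg.2 hle, by simp [hg], ?_, ?_⟩
  · simpa using mul_nonneg ht₀ hωg
  · refine Finset.card_lt_card (Finset.ssubset_iff_of_subset ?_ |>.2 ⟨j, ?_, ?_⟩)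
    · exact_mod_cast (supported ℝ ℝ (c.support : Set ι)).sub_mem
        (Finsupp.mem_supported_support ℝ c) (Submodule.smul_mem _ t hgc)
    · exact hgc (by simpa using hj.ne')
    · simp [hjc]

theorem exists_nonneg_linearIndepOn_support {ht : E →ₗ[ℝ] ℝ} (hht : ∀ i, 0 < ht (v i))
    (ω : ι → ℝ) {c : ι →₀ ℝ} (hc : 0 ≤ c) :
    ∃ c' : ι →₀ ℝ, 0 ≤ c' ∧ linearCombination ℝ v c' = linearCombination ℝ v c ∧
      linearCombination ℝ ω c' ≤ linearCombination ℝ ω c ∧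
      LinearIndepOn ℝ v (c'.support : Set ι) := by
  induction hn : c.support.card using Nat.strong_induction_on generalizing c with
  | _ n ih =>
    by_cases hli : LinearIndepOn ℝ v (c.support : Set ι)
    · exact ⟨c, hc, rfl, le_rfl, hli⟩
    obtain ⟨c₁, hc₁, hv₁, hω₁, hcard⟩ := exists_card_support_lt_of_not_linearIndepOn hht ω hc hli
    obtain ⟨c₂, hc₂, hv₂, hω₂, hli₂⟩ := ih _ (hn ▸ hcard) hc₁ rfl
    exact ⟨c₂, hc₂, hv₂.trans hv₁, hω₂.trans hω₁, hli₂⟩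

end ConicCombinations

section Genericity

open Filter Topology
open Finsupp (linearCombination)

variable {ι E : Type*} [AddCommGroup E] [Module ℝ E]

/-- A vector is generic with respect to `v` when it lies on no proper subspace of the span of `v`
that is spanned by members of `v`. -/
def IsGeneric (v : ι → E) (y : E) : Prop :=
  ∀ T : Set ι, y ∈ Submodule.span ℝ (v '' T) →
    Submodule.span ℝ (v '' T) = Submodule.span ℝ (Set.range v)

variable [Finite ι]

theorem exists_isGeneric_mem_span (v : ι → E) :
    ∃ y ∈ Submodule.span ℝ (Set.range v), IsGeneric v y := by
  let W := Submodule.span ℝ (Set.range v)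
  obtain ⟨y, hy⟩ := Submodule.exists_forall_notMem_of_forall_ne_top
    (fun T : {T : Set ι // Submodule.span ℝ (v '' T) ≠ W} =>
      (Submodule.span ℝ (v '' T.1)).comap W.subtype) fun T hT =>
    T.2 ((Submodule.span_mono (Set.image_subset_range v T.1)).antisymm
      (Submodule.comap_subtype_eq_top.1 hT))
  exact ⟨y, y.2, fun T hT => not_not.1 fun hne => hy ⟨T, hne⟩ hT⟩

theorem IsGeneric.eventually_add_smul {v : ι → E} {y : E} (hy : IsGeneric v y) (x : E) :
    ∀ᶠ ε : ℝ in 𝓝[>] 0, IsGeneric v (x + ε • y) := by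
  refine eventually_all.2 fun T => ?_
  by_cases hT : y ∈ Submodule.span ℝ (v '' T)
  · exact .of_forall fun _ _ => hy T hT
  · filter_upwards [eventually_add_smul_notMem hT x] with ε hε hmem using absurd hmem hε

theorem exists_isGeneric_mem_hull (v : ι → E) :
    ∃ y ∈ PointedCone.hull ℝ (Set.range v), IsGeneric v y := by
  obtain ⟨y, hyW, hy⟩ := exists_isGeneric_mem_span v
  obtain ⟨c, rfl⟩ := Finsupp.mem_span_range_iff_exists_finsupp.1 hyW
  let one : ι →₀ ℝ := Finsupp.equivFunOnFinite.symm 1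
  have hnonneg : ∀ i, ∀ᶠ ε : ℝ in 𝓝[>] 0, 0 ≤ 1 + ε * c i := fun i =>
    (tendsto_add_mul_nhdsGT_zero 1 (c i)).eventually_const_le one_pos
  obtain ⟨ε, hgen, hε⟩ := ((hy.eventually_add_smul (linearCombination ℝ v one)).and
    (eventually_all.2 hnonneg)).exists
  refine ⟨_, mem_hull_range_iff_exists_nonneg.2 ⟨one + ε • c, hε, ?_⟩, hgen⟩
  rw [map_add, map_smul, Finsupp.linearCombination_apply ℝ c]

end Genericity

/-- A set of indices whose members in the family `v` form a basis of the span of `v`: the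
combinatorial datum of a full-dimensional simplicial cone spanned by vectors of `v`. -/
@[ext]
structure SelectedBasis {ι E : Type*} [AddCommGroup E] [Module ℝ E] (v : ι → E) where
  support : Finset ι
  linearIndepOn : LinearIndepOn ℝ v (support : Set ι)
  span_image : Submodule.span ℝ (v '' support) = Submodule.span ℝ (Set.range v)

namespace SelectedBasis

open Filter Topology
open Finsupp (linearCombination supported single)

variable {ι E : Type*} [AddCommGroup E] [Module ℝ E] {v : ι → E} (B : SelectedBasis v)

instance [Finite ι] : Finite (SelectedBasis v) :=
  Finite.of_injective support fun _ _ => SelectedBasis.ext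

theorem card_support : B.support.card = Module.finrank ℝ (Submodule.span ℝ (Set.range v)) := by
  have hrange : Set.range (fun i : B.support => v i) = v '' B.support :=
    (Set.image_eq_range v _).symm
  rw [← B.span_image, ← hrange]
  exact ((finrank_span_eq_card B.linearIndepOn.linearIndependent).trans (Fintype.card_coe _)).symm

theorem exists_coord : ∃ f : E →ₗ[ℝ] ι →₀ ℝ,
    (∀ x, f x ∈ supported ℝ ℝ (B.support : Set ι)) ∧
      ∀ c ∈ supported ℝ ℝ (B.support : Set ι), f (linearCombination ℝ v c) = c := by
  let S := supported ℝ ℝ (B.support : Set ι)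
  have hker : LinearMap.ker (linearCombination ℝ v ∘ₗ S.subtype) = ⊥ :=
    LinearMap.ker_eq_bot'.2 fun c hc => Subtype.ext (linearIndepOn_iff.1 B.linearIndepOn c c.2 hc)
  obtain ⟨g, hg⟩ := LinearMap.exists_leftInverse_of_injective (V := S) (V' := E) _ hker
  exact ⟨S.subtype ∘ₗ g, fun x => (g x).2,
    fun c hc => congrArg Subtype.val (LinearMap.congr_fun hg ⟨c, hc⟩)⟩

/-- The coordinates of a vector in the basis, as a family indexed by all of `ι` which vanishes
outside the basis. Outside the span of `v` the values depend on an arbitrary choice of a linear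
extension. -/
noncomputable def coord : E →ₗ[ℝ] ι →₀ ℝ := B.exists_coord.choose

theorem coord_mem_supported (x : E) : B.coord x ∈ supported ℝ ℝ (B.support : Set ι) :=
  B.exists_coord.choose_spec.1 x

theorem coord_apply_of_notMem (x : E) {i : ι} (hi : i ∉ B.support) : B.coord x i = 0 :=
  (Finsupp.mem_supported' ℝ _).1 (B.coord_mem_supported x) i hi

theorem coord_linearCombination {c : ι →₀ ℝ} (hc : c ∈ supported ℝ ℝ (B.support : Set ι)) :
    B.coord (linearCombination ℝ v c) = c :=
  B.exists_coord.choose_spec.2 c hc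

theorem coord_self {i : ι} (hi : i ∈ B.support) : B.coord (v i) = single i 1 := by
  simpa using B.coord_linearCombination (Finsupp.single_mem_supported ℝ 1 hi)

theorem linearCombination_coord {x : E} (hx : x ∈ Submodule.span ℝ (Set.range v)) :
    linearCombination ℝ v (B.coord x) = x := by
  rw [← B.span_image, Finsupp.mem_span_image_iff_linearCombination] at hx
  obtain ⟨c, hc, rfl⟩ := hx
  rw [B.coord_linearCombination hc]

/-- The linear functional that takes the values `ω i` at the basis vectors `v i`. -/
noncomputable def constr (ω : ι → ℝ) : E →ₗ[ℝ] ℝ := linearCombination ℝ ω ∘ₗ B.coord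

/-- The relative interior of the simplicial cone spanned by the basis. -/
def openCone : Set E :=
  {x | x ∈ Submodule.span ℝ (Set.range v) ∧ ∀ i ∈ B.support, 0 < B.coord x i}

/-- The simplicial cone spanned by the basis without the facets that are visible from `q`: a point
belongs to it when, for generic `q`, adding a small positive multiple of `q` brings it into the
open cone. -/
def halfOpenCone (q : E) : Set E :=
  {x | x ∈ Submodule.span ℝ (Set.range v) ∧
    ∀ i ∈ B.support, 0 ≤ B.coord x i ∧ (B.coord q i < 0 → 0 < B.coord x i)}

/-- Optimality for the linear program that writes a vector as a nonnegative combination of `v` at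
minimal cost `ω`. Geometrically, the lifted cone spanned by the `(v i, ω i)` with `i` in the basis
is a lower facet of the cone spanned by all of them. -/
def IsOptimal (ω : ι → ℝ) : Prop := ∀ i, B.constr ω (v i) ≤ ω i

variable {B}

theorem coord_ne_zero_of_isGeneric {y : E} (hy : IsGeneric v y)
    (hyW : y ∈ Submodule.span ℝ (Set.range v)) {i : ι} (hi : i ∈ B.support) :
    B.coord y i ≠ 0 := by
  intro h0
  have hmem : y ∈ Submodule.span ℝ (v '' (B.support \ {i} : Set ι)) := by
    refine (Finsupp.mem_span_image_iff_linearCombination ℝ).2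
      ⟨B.coord y, (Finsupp.mem_supported' ℝ _).2 fun j hj => ?_, B.linearCombination_coord hyW⟩
    by_cases hji : j = i
    · rwa [hji]
    · exact B.coord_apply_of_notMem y fun h => hj ⟨h, hji⟩
  exact B.linearIndepOn.notMem_span hi ((hy _ hmem).ge (Submodule.subset_span ⟨i, rfl⟩))

theorem coord_nonneg_of_mem_openCone {x : E} (hx : x ∈ B.openCone) : 0 ≤ B.coord x := fun i => by
  by_cases hi : i ∈ B.support
  · exact (hx.2 i hi).le
  · exact (B.coord_apply_of_notMem x hi).ge

theorem exists_mem_openCone_constr_le {ht : E →ₗ[ℝ] ℝ} (hht : ∀ i, 0 < ht (v i)) (ω : ι → ℝ)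
    {c : ι →₀ ℝ} (hc : 0 ≤ c) (hgen : IsGeneric v (linearCombination ℝ v c)) :
    ∃ B : SelectedBasis v, linearCombination ℝ v c ∈ B.openCone ∧
      B.constr ω (linearCombination ℝ v c) ≤ linearCombination ℝ ω c := by
  obtain ⟨c', hc', hv, hω, hli⟩ := exists_nonneg_linearIndepOn_support hht ω hc
  have hsupp : c' ∈ supported ℝ ℝ (c'.support : Set ι) := Finsupp.mem_supported_support ℝ c'
  rw [← hv] at hgen ⊢
  let B : SelectedBasis v := ⟨c'.support, hli,
    hgen _ ((Finsupp.mem_span_image_iff_linearCombination ℝ).2 ⟨c', hsupp, rfl⟩)⟩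
  have hcoord : B.coord (linearCombination ℝ v c') = c' := B.coord_linearCombination hsupp
  refine ⟨B, ⟨Finsupp.mem_span_range_iff_exists_finsupp.2 ⟨c', rfl⟩, fun i hi => ?_⟩, ?_⟩
  · rw [hcoord]
    exact (hc' i).lt_of_ne (Finsupp.mem_support_iff.1 hi).symm
  · rwa [constr, LinearMap.comp_apply, hcoord]

/-- Among the simplicial cones that contain a generic `y`, the one with the cheapest coordinates
is optimal: if some `v k` were too cheap, shifting a little weight onto it would lower the cost. -/
theorem exists_isOptimal [Finite ι] {ht : E →ₗ[ℝ] ℝ} (hht : ∀ i, 0 < ht (v i)) (ω : ι → ℝ)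
    {y : E} (hy : y ∈ PointedCone.hull ℝ (Set.range v)) (hgen : IsGeneric v y) :
    ∃ B : SelectedBasis v, y ∈ B.openCone ∧ B.IsOptimal ω := by
  obtain ⟨c₀, hc₀, hcy₀⟩ := mem_hull_range_iff_exists_nonneg.1 hy
  obtain ⟨B₀, hyB₀, -⟩ := exists_mem_openCone_constr_le hht ω hc₀ (hcy₀ ▸ hgen)
  obtain ⟨B, hyB, hmin⟩ := Set.exists_min_image {B : SelectedBasis v | y ∈ B.openCone}
    (fun B => B.constr ω y) (Set.toFinite _) ⟨B₀, hcy₀ ▸ hyB₀⟩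
  refine ⟨B, hyB, fun k => ?_⟩
  by_contra! hk
  obtain ⟨t, ht₀, hle⟩ := exists_pos_smul_le hyB.2 (B.coord (v k))
  let c := B.coord y - t • B.coord (v k) + single k t
  have hc : 0 ≤ c := by
    refine add_nonneg (sub_nonneg.2 fun i => ?_) (Finsupp.single_nonneg.2 ht₀.le)
    by_cases hi : i ∈ B.support
    · exact hle i hi
    · simp [B.coord_apply_of_notMem _ hi]
  have hcy : linearCombination ℝ v c = y := by
    simp [c, B.linearCombination_coord hyB.1,
      B.linearCombination_coord (Submodule.subset_span ⟨k, rfl⟩)]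
  have hcω : linearCombination ℝ ω c = B.constr ω y - t * (B.constr ω (v k) - ω k) := by
    simp [c, constr]
    ring
  obtain ⟨C, hyC, hC⟩ := exists_mem_openCone_constr_le hht ω hc (hcy ▸ hgen)
  rw [hcy] at hyC hC
  have := hmin C hyC
  nlinarith [mul_pos ht₀ (sub_pos.2 hk)]

theorem IsOptimal.constr_linearCombination_le {ω : ι → ℝ} (hB : B.IsOptimal ω) {c : ι →₀ ℝ}
    (hc : 0 ≤ c) : B.constr ω (linearCombination ℝ v c) ≤ linearCombination ℝ ω c := by
  rw [Finsupp.apply_linearCombination]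
  exact Finset.sum_le_sum fun i _ => mul_le_mul_of_nonneg_left (hB i) (hc i)

theorem IsOptimal.constr_eq_of_linearCombination_le {ω : ι → ℝ} (hB : B.IsOptimal ω)
    {c : ι →₀ ℝ} (hc : 0 ≤ c) (hle : linearCombination ℝ ω c ≤ B.constr ω (linearCombination ℝ v c))
    {i : ι} (hi : i ∈ c.support) : B.constr ω (v i) = ω i := by
  rw [Finsupp.apply_linearCombination] at hle
  have hterm : ∀ i ∈ c.support, c i * B.constr ω (v i) ≤ c i * ω i := fun i _ =>
    mul_le_mul_of_nonneg_left (hB i) (hc i)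
  exact mul_left_cancel₀ (Finsupp.mem_support_iff.1 hi)
    ((Finset.sum_eq_sum_iff_of_le hterm).1 ((Finset.sum_le_sum hterm).antisymm hle) i hi)

theorem IsOptimal.support_subset {ω : ι → ℝ} {C : SelectedBasis v} (hB : B.IsOptimal ω)
    (hC : C.IsOptimal ω) (hω : ∀ i, B.constr ω (v i) = ω i → i ∈ B.support) {y : E}
    (hyB : y ∈ B.openCone) (hyC : y ∈ C.openCone) : C.support ⊆ B.support := by
  have hcost : C.constr ω y ≤ B.constr ω y := by
    have := hC.constr_linearCombination_le (coord_nonneg_of_mem_openCone hyB)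
    rwa [B.linearCombination_coord hyB.1] at this
  refine fun i hi => hω i (hB.constr_eq_of_linearCombination_le
    (coord_nonneg_of_mem_openCone hyC) ?_ (Finsupp.mem_support_iff.2 (hyC.2 i hi).ne'))
  rwa [C.linearCombination_coord hyC.1]

theorem exists_generic_cost [Finite ι] (v : ι → E) :
    ∃ ω : ι → ℝ, ∀ (B : SelectedBasis v) (i : ι), B.constr ω (v i) = ω i → i ∈ B.support := by
  let defect (B : SelectedBasis v) (i : ι) : Module.Dual ℝ (ι → ℝ) :=
    (Finsupp.bilinearCombination ℝ ℝ).flip (B.coord (v i)) - LinearMap.proj i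
  have hdefect : ∀ p : {p : SelectedBasis v × ι // p.2 ∉ p.1.support},
      ∃ ω, defect p.1.1 p.1.2 ω ≠ 0 := by
    classical
    rintro ⟨⟨B, i⟩, hi⟩
    refine ⟨Pi.single i 1, ?_⟩
    have h0 : B.coord (v i) i = 0 := B.coord_apply_of_notMem _ hi
    simp [defect, h0]
  obtain ⟨ω, hω⟩ := Module.Dual.exists_forall_ne_zero_of_forall_exists _ hdefect
  refine ⟨ω, fun B i h => ?_⟩
  by_contra hi
  exact hω ⟨(B, i), hi⟩ (sub_eq_zero.2 h)

theorem eventually_add_smul_mem_openCone_iff {q x : E} (hq : IsGeneric v q)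
    (hqW : q ∈ Submodule.span ℝ (Set.range v)) :
    ∀ᶠ ε : ℝ in 𝓝[>] 0, x + ε • q ∈ B.openCone ↔ x ∈ B.halfOpenCone q := by
  have hcoord : ∀ i ∈ B.support, ∀ᶠ ε : ℝ in 𝓝[>] 0, 0 < B.coord (x + ε • q) i ↔
      0 ≤ B.coord x i ∧ (B.coord q i < 0 → 0 < B.coord x i) := fun i hi => by
    simpa using eventually_pos_add_mul_iff (B.coord x i) (coord_ne_zero_of_isGeneric hq hqW hi)
  filter_upwards [(eventually_all_finset _).2 hcoord] with ε hε
  refine and_congr (Submodule.add_mem_iff_left _ (Submodule.smul_mem _ ε hqW)) (forall₂_congr hε)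

theorem existsUnique_isOptimal_mem_halfOpenCone [Finite ι] {ht : E →ₗ[ℝ] ℝ}
    (hht : ∀ i, 0 < ht (v i)) {ω : ι → ℝ}
    (hω : ∀ (B : SelectedBasis v) (i : ι), B.constr ω (v i) = ω i → i ∈ B.support) {q : E}
    (hq : q ∈ PointedCone.hull ℝ (Set.range v)) (hgen : IsGeneric v q) {x : E}
    (hx : x ∈ PointedCone.hull ℝ (Set.range v)) :
    ∃! B : SelectedBasis v, B.IsOptimal ω ∧ x ∈ B.halfOpenCone q := by
  obtain ⟨ε, hε, hy, hiff⟩ := (eventually_mem_nhdsWithin.and ((hgen.eventually_add_smul x).and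
    (eventually_all.2 fun B : SelectedBasis v =>
      B.eventually_add_smul_mem_openCone_iff hgen (PointedCone.hull_le_span _ _ hq)))).exists
  obtain ⟨B, hyB, hB⟩ := exists_isOptimal hht ω
    (add_mem hx (PointedCone.smul_mem _ (le_of_lt hε) hq)) hy
  refine ⟨B, ⟨hB, (hiff B).1 hyB⟩, fun C ⟨hC, hxC⟩ => ?_⟩
  have hyC := (hiff C).2 hxC
  exact SelectedBasis.ext ((hB.support_subset hC (hω B) hyB hyC).antisymm
    (hC.support_subset hB (hω C) hyC hyB))

theorem halfOpenCone_subset_hull (B : SelectedBasis v) (q : E) :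
    B.halfOpenCone q ⊆ PointedCone.hull ℝ (Set.range v) := fun x hx => by
  refine mem_hull_range_iff_exists_nonneg.2 ⟨B.coord x, fun i => ?_, B.linearCombination_coord hx.1⟩
  by_cases hi : i ∈ B.support
  · exact (hx.2 i hi).1
  · exact (B.coord_apply_of_notMem x hi).ge

theorem exists_iUnion_halfOpenCone_eq_hull [Finite ι] {ht : E →ₗ[ℝ] ℝ}
    (hht : ∀ i, 0 < ht (v i)) :
    ∃ 𝓑 : Set (SelectedBasis v), ∃ q ∈ PointedCone.hull ℝ (Set.range v),
      ⋃ B : 𝓑, B.1.halfOpenCone q = PointedCone.hull ℝ (Set.range v) ∧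
        Pairwise (Function.onFun Disjoint fun B : 𝓑 => B.1.halfOpenCone q) := by
  obtain ⟨q, hq, hgen⟩ := exists_isGeneric_mem_hull v
  obtain ⟨ω, hω⟩ := exists_generic_cost v
  refine ⟨{B | B.IsOptimal ω}, q, hq, ?_, fun B C hBC => ?_⟩
  · refine Set.Subset.antisymm (Set.iUnion_subset fun B => B.1.halfOpenCone_subset_hull q)
      fun x hx => ?_
    obtain ⟨B, ⟨hB, hxB⟩, -⟩ := existsUnique_isOptimal_mem_halfOpenCone hht hω hq hgen hx
    exact Set.mem_iUnion.2 ⟨⟨B, hB⟩, hxB⟩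
  · refine Set.disjoint_left.2 fun x hxB hxC => hBC (Subtype.ext ?_)
    exact (existsUnique_isOptimal_mem_halfOpenCone hht hω hq hgen
      (B.1.halfOpenCone_subset_hull q hxB)).unique ⟨B.2, hxB⟩ ⟨C.2, hxC⟩

theorem add_mem_halfOpenCone {q x : E} (hx : x ∈ B.halfOpenCone q) {i : ι} (hi : i ∈ B.support) :
    x + v i ∈ B.halfOpenCone q := by
  classical
  refine ⟨add_mem hx.1 (Submodule.subset_span ⟨i, rfl⟩), fun j hj => ?_⟩
  have hle : B.coord x j ≤ B.coord (x + v i) j := by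
    simp [B.coord_self hi, Finsupp.single_apply, apply_ite]
  exact ⟨(hx.2 j hj).1.trans hle, fun hq => ((hx.2 j hj).2 hq).trans_le hle⟩

theorem sub_mem_halfOpenCone_iff {q x : E} (hx : x ∈ B.halfOpenCone q) {i : ι}
    (hi : i ∈ B.support) : x - v i ∈ B.halfOpenCone q ↔
      1 ≤ B.coord x i ∧ (B.coord q i < 0 → 1 < B.coord x i) := by
  have hself : B.coord (x - v i) i = B.coord x i - 1 := by simp [B.coord_self hi]
  refine ⟨fun h => by simpa only [hself, sub_nonneg, sub_pos] using h.2 i hi, fun h =>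
    ⟨sub_mem hx.1 (Submodule.subset_span ⟨i, rfl⟩), fun j hj => ?_⟩⟩
  rcases eq_or_ne j i with rfl | hji
  · simpa only [hself, sub_nonneg, sub_pos] using h
  · simpa [B.coord_self hi, hji.symm] using hx.2 j hj

theorem sub_mem_halfOpenCone_of_add_sub_mem {q x : E} (hx : x ∈ B.halfOpenCone q) {i j : ι}
    (hi : i ∈ B.support) (hj : j ∈ B.support) (hij : i ≠ j)
    (h : x + v i - v j ∈ B.halfOpenCone q) : x - v j ∈ B.halfOpenCone q := by
  have hcoord : B.coord (x + v i) j = B.coord x j := by simp [B.coord_self hi, hij]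
  rw [sub_mem_halfOpenCone_iff (add_mem_halfOpenCone hx hi) hj, hcoord] at h
  exact (sub_mem_halfOpenCone_iff hx hj).2 h

/-- The points of the half-open simplicial cone from which no basis vector can be subtracted: the
half-open unit parallelepiped spanned by the basis. -/
def box (B : SelectedBasis v) (q : E) : Set E :=
  {x ∈ B.halfOpenCone q | ∀ i ∈ B.support, x - v i ∉ B.halfOpenCone q}

theorem coord_le_one_of_mem_box {q x : E} (hx : x ∈ B.box q) {i : ι} (hi : i ∈ B.support) :
    B.coord x i ≤ 1 := by
  by_contra! h
  exact hx.2 i hi ((sub_mem_halfOpenCone_iff hx.1 hi).2 ⟨h.le, fun _ => h⟩)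

theorem coord_lt_one_of_mem_box {q x : E} (hx : x ∈ B.box q) {i : ι} (hi : i ∈ B.support)
    (hq : 0 ≤ B.coord q i) : B.coord x i < 1 := by
  by_contra! h
  exact hx.2 i hi ((sub_mem_halfOpenCone_iff hx.1 hi).2 ⟨h, fun h' => absurd h' hq.not_gt⟩)

theorem height_eq_sum_coord (B : SelectedBasis v) {ht : E →ₗ[ℝ] ℝ} (hht : ∀ i, ht (v i) = 1)
    {x : E} (hx : x ∈ Submodule.span ℝ (Set.range v)) : ht x = ∑ i ∈ B.support, B.coord x i := by
  conv_lhs => rw [← B.linearCombination_coord hx, Finsupp.apply_linearCombination,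
    Finsupp.linearCombination_apply_of_mem_supported ℝ (B.coord_mem_supported x)]
  simp [hht]

theorem height_lt_of_mem_box [Nonempty ι] {ht : E →ₗ[ℝ] ℝ} (hht : ∀ i, ht (v i) = 1) {q : E}
    (hq : q ∈ PointedCone.hull ℝ (Set.range v)) {x : E} (hx : x ∈ B.box q) :
    ht x < Module.finrank ℝ (Submodule.span ℝ (Set.range v)) := by
  have hne : B.support.Nonempty := by
    obtain ⟨i⟩ := ‹Nonempty ι›
    by_contra! h
    simpa [B.height_eq_sum_coord hht (Submodule.subset_span ⟨i, rfl⟩), h] using hht i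
  obtain ⟨k, hk, hqk⟩ : ∃ k ∈ B.support, 0 ≤ B.coord q k := by
    by_contra! hneg
    refine (nonneg_of_mem_hull (fun i => (hht i).ge.trans' zero_le_one) hq).not_gt ?_
    rw [B.height_eq_sum_coord hht (PointedCone.hull_le_span _ _ hq)]
    exact Finset.sum_neg hneg hne
  calc ht x = ∑ i ∈ B.support, B.coord x i := B.height_eq_sum_coord hht hx.1.1
    _ < ∑ i ∈ B.support, 1 := Finset.sum_lt_sum (fun i hi => coord_le_one_of_mem_box hx hi)
      ⟨k, hk, coord_lt_one_of_mem_box hx hk hqk⟩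
    _ = _ := by simp [B.card_support]

end SelectedBasis

section CountingSeries

open PowerSeries (X)

variable {G : Type*} [AddCommGroup G] {deg : G →+ ℤ}

/-- The generating series counting the elements of `A` by degree. Elements of negative degree are
ignored, and a degree that is attained infinitely often contributes `0`. -/
noncomputable def countingSeries (deg : G →+ ℤ) (A : Set G) : PowerSeries ℤ :=
  PowerSeries.mk fun m => ({x ∈ A | deg x = m}.ncard : ℤ)

theorem coeff_countingSeries (A : Set G) (m : ℕ) :
    PowerSeries.coeff m (countingSeries deg A) = {x ∈ A | deg x = m}.ncard :=
  PowerSeries.coeff_mk _ _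

theorem countingSeries_iUnion {κ : Type*} [Fintype κ] {A : κ → Set G}
    (hfin : ∀ k, ∀ m : ℕ, {x ∈ A k | deg x = m}.Finite)
    (hA : Pairwise (Function.onFun Disjoint A)) :
    countingSeries deg (⋃ k, A k) = ∑ k, countingSeries deg (A k) := by
  ext m
  have hunion : {x ∈ ⋃ k, A k | deg x = m} = ⋃ k, {x ∈ A k | deg x = m} := Set.iUnion_inter _ _
  rw [map_sum]
  simp only [coeff_countingSeries]
  rw [hunion, Set.ncard_iUnion_of_finite (hfin · m)
    fun i j hij => (hA hij).mono Set.inter_subset_left Set.inter_subset_left,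
    finsum_eq_sum_of_fintype, Nat.cast_sum]

theorem countingSeries_union {A B : Set G} (hA : ∀ m : ℕ, {x ∈ A | deg x = m}.Finite)
    (hB : ∀ m : ℕ, {x ∈ B | deg x = m}.Finite) (hAB : Disjoint A B) :
    countingSeries deg (A ∪ B) = countingSeries deg A + countingSeries deg B := by
  ext m
  have hunion : {x ∈ A ∪ B | deg x = m} = {x ∈ A | deg x = m} ∪ {x ∈ B | deg x = m} :=
    Set.union_inter_distrib_right A B _
  rw [map_add]
  simp only [coeff_countingSeries]
  have hdisj : Disjoint {x ∈ A | deg x = m} {x ∈ B | deg x = m} :=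
    hAB.mono Set.inter_subset_left Set.inter_subset_left
  rw [hunion, Set.ncard_union_eq hdisj (hA m) (hB m), Nat.cast_add]

theorem setOf_mem_image_add_right {A : Set G} {b : G} (hb : deg b = 1) (m : ℕ) :
    {x ∈ (· + b) '' A | deg x = (m + 1 : ℕ)} = (· + b) '' {x ∈ A | deg x = m} := by
  ext x
  constructor
  · rintro ⟨⟨y, hy, rfl⟩, hm⟩
    exact ⟨y, ⟨hy, by simpa [hb] using hm⟩, rfl⟩
  · rintro ⟨y, ⟨hy, hm⟩, rfl⟩
    exact ⟨⟨y, hy, rfl⟩, by simp [hb, hm]⟩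

theorem countingSeries_image_add_right {A : Set G} {b : G} (hb : deg b = 1)
    (hnonneg : ∀ x ∈ A, 0 ≤ deg x) :
    countingSeries deg ((· + b) '' A) = countingSeries deg A * X := by
  ext m
  cases m with
  | zero =>
    have hempty : {x ∈ (· + b) '' A | deg x = (0 : ℕ)} = ∅ := by
      refine Set.eq_empty_of_forall_notMem ?_
      rintro _ ⟨⟨x, hx, rfl⟩, h0⟩
      have := hnonneg x hx
      simp only [map_add, hb, Nat.cast_zero] at h0
      omega
    rw [PowerSeries.coeff_zero_mul_X, coeff_countingSeries, hempty, Set.ncard_empty, Nat.cast_zero]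
  | succ m =>
    rw [PowerSeries.coeff_succ_mul_X, coeff_countingSeries, coeff_countingSeries,
      setOf_mem_image_add_right hb, Set.ncard_image_of_injective _ (add_left_injective b)]

theorem countingSeries_mul_one_sub_X {A : Set G} {b : G} (hb : deg b = 1)
    (hfin : ∀ m : ℕ, {x ∈ A | deg x = m}.Finite) (hnonneg : ∀ x ∈ A, 0 ≤ deg x)
    (hA : ∀ x ∈ A, x + b ∈ A) :
    countingSeries deg A * (1 - X) = countingSeries deg {x ∈ A | x - b ∉ A} := by
  have hsub : (· + b) '' A ⊆ A := Set.image_subset_iff.2 hA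
  have hdiff : {x ∈ A | x - b ∉ A} = A \ (· + b) '' A := by
    ext x
    simp [sub_eq_add_neg]
  have hunion := countingSeries_union (deg := deg) (A := A \ (· + b) '' A) (B := (· + b) '' A)
    (fun m => (hfin m).subset fun x hx => ⟨hx.1.1, hx.2⟩)
    (fun m => (hfin m).subset fun x hx => ⟨hsub hx.1, hx.2⟩) Set.disjoint_sdiff_left
  rw [Set.sdiff_union_of_subset hsub, countingSeries_image_add_right hb hnonneg] at hunion
  rw [hdiff, mul_sub, mul_one, sub_eq_iff_eq_add]
  exact hunion

theorem countingSeries_mul_one_sub_X_pow {ι : Type*} {A : Set G} {b : ι → G} {T : Finset ι}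
    (hb : ∀ i ∈ T, deg (b i) = 1) (hfin : ∀ m : ℕ, {x ∈ A | deg x = m}.Finite)
    (hnonneg : ∀ x ∈ A, 0 ≤ deg x) (hadd : ∀ i ∈ T, ∀ x ∈ A, x + b i ∈ A)
    (hsub : ∀ i ∈ T, ∀ j ∈ T, i ≠ j → ∀ x ∈ A, x + b i - b j ∈ A → x - b j ∈ A) :
    countingSeries deg A * (1 - X) ^ T.card =
      countingSeries deg {x ∈ A | ∀ i ∈ T, x - b i ∉ A} := by
  classical
  induction T using Finset.induction_on with
  | empty => simp
  | insert i T hi ih =>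
    simp only [Finset.forall_mem_insert] at hb hadd hsub ⊢
    have hclosed : ∀ x ∈ {x ∈ A | ∀ j ∈ T, x - b j ∉ A}, x + b i ∈ {x ∈ A | ∀ j ∈ T, x - b j ∉ A} :=
      fun x hx => ⟨hadd.1 x hx.1, fun j hj h => hx.2 j hj
        (hsub.1.2 j hj (ne_of_mem_of_not_mem hj hi).symm x hx.1 h)⟩
    rw [Finset.card_insert_of_notMem hi, pow_succ, ← mul_assoc,
      ih hb.2 hadd.2 fun j hj k hk => (hsub.2 j hj).2 k hk,
      countingSeries_mul_one_sub_X hb.1 (fun m => (hfin m).subset fun x hx => ⟨hx.1.1, hx.2⟩)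
        (fun x hx => hnonneg x hx.1) hclosed]
    congr 1
    ext x
    constructor
    · rintro ⟨⟨hx, hxT⟩, hxi⟩
      refine ⟨hx, fun h => hxi ⟨h, fun j hj hj' => hxT j hj ?_⟩, hxT⟩
      rw [show x - b j = x - b i - b j + b i by abel]
      exact hadd.1 _ hj'
    · rintro ⟨hx, hxi, hxT⟩
      exact ⟨⟨hx, hxT⟩, fun h => hxi h.1⟩

theorem exists_polynomial_coe_eq_of_coeff_nonneg {s : PowerSeries ℤ} {n : ℕ}
    (hnonneg : ∀ m, 0 ≤ PowerSeries.coeff m s) (hs : ∀ m, n < m → PowerSeries.coeff m s = 0) :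
    ∃ h : Polynomial ℤ, h.natDegree ≤ n ∧ (∀ i, 0 ≤ h.coeff i) ∧ s = h := by
  have hcoe : s = (s.trunc (n + 1) : Polynomial ℤ) := by
    ext m
    rw [Polynomial.coeff_coe, PowerSeries.coeff_trunc]
    split_ifs with hm
    · rfl
    · exact hs m (by omega)
  refine ⟨s.trunc (n + 1), Nat.lt_succ_iff.1 (PowerSeries.natDegree_trunc_lt s n),
    fun i => ?_, hcoe⟩
  rw [← Polynomial.coeff_coe, ← hcoe]
  exact hnonneg i

end CountingSeries

section LatticePointsOfCones

open PowerSeries (X)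

variable {ι E G : Type*} [AddCommGroup E] [Module ℝ E] [AddCommGroup G] {v : ι → E} {e : ι → G}
  {ψ : G →+ E} {ht : E →ₗ[ℝ] ℝ} {deg : G →+ ℤ}

theorem SelectedBasis.countingSeries_halfOpenCone_mul (B : SelectedBasis v) (q : E)
    (hv : ∀ i, ψ (e i) = v i) (hht : ∀ i, ht (v i) = 1) (hdeg : ∀ g, ht (ψ g) = deg g)
    (hfin : ∀ m : ℕ, {g ∈ ψ ⁻¹' B.halfOpenCone q | deg g = m}.Finite) :
    countingSeries deg (ψ ⁻¹' B.halfOpenCone q) *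
        (1 - X) ^ Module.finrank ℝ (Submodule.span ℝ (Set.range v)) =
      countingSeries deg (ψ ⁻¹' B.box q) := by
  have hone : ∀ i, deg (e i) = 1 := fun i => by
    exact_mod_cast (hdeg (e i)).symm.trans ((congrArg ht (hv i)).trans (hht i))
  have hnonneg : ∀ g ∈ ψ ⁻¹' B.halfOpenCone q, 0 ≤ deg g := fun g hg => by
    have := nonneg_of_mem_hull (fun i => (hht i).ge.trans' zero_le_one)
      (B.halfOpenCone_subset_hull q hg)
    exact_mod_cast (hdeg g).subst this
  rw [← B.card_support, countingSeries_mul_one_sub_X_pow (b := e) (fun i _ => hone i) hfin hnonneg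
    (fun i hi g hg => ?_) (fun i hi j hj hij g hg h => ?_)]
  · simp only [Set.mem_preimage, map_sub, hv]
    rfl
  · simpa [hv] using add_mem_halfOpenCone hg hi
  · simp only [Set.mem_preimage, map_add, map_sub, hv] at hg h ⊢
    exact sub_mem_halfOpenCone_of_add_sub_mem hg hi hj hij h

theorem exists_polynomial_countingSeries_hull_mul [Finite ι] [Nonempty ι]
    (hv : ∀ i, ψ (e i) = v i) (hht : ∀ i, ht (v i) = 1) (hdeg : ∀ g, ht (ψ g) = deg g)
    (hfin : ∀ m : ℕ, {g ∈ ψ ⁻¹' PointedCone.hull ℝ (Set.range v) | deg g = m}.Finite) {n : ℕ}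
    (hn : Module.finrank ℝ (Submodule.span ℝ (Set.range v)) = n + 1) :
    ∃ h : Polynomial ℤ, h.natDegree ≤ n ∧ (∀ i, 0 ≤ h.coeff i) ∧
      countingSeries deg (ψ ⁻¹' PointedCone.hull ℝ (Set.range v)) * (1 - X) ^ (n + 1) =
        (h : PowerSeries ℤ) := by
  obtain ⟨𝓑, q, hq, hunion, hdisj⟩ :=
    SelectedBasis.exists_iUnion_halfOpenCone_eq_hull (v := v) (ht := ht) fun i => by simp [hht]
  have := Fintype.ofFinite 𝓑
  have hfinB : ∀ B : 𝓑, ∀ m : ℕ, {g ∈ ψ ⁻¹' B.1.halfOpenCone q | deg g = m}.Finite := fun B m =>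
    (hfin m).subset fun g hg => ⟨B.1.halfOpenCone_subset_hull q hg.1, hg.2⟩
  have hseries : countingSeries deg (ψ ⁻¹' PointedCone.hull ℝ (Set.range v)) * (1 - X) ^ (n + 1) =
      ∑ B : 𝓑, countingSeries deg (ψ ⁻¹' B.1.box q) := by
    rw [← hunion, Set.preimage_iUnion, countingSeries_iUnion hfinB
      fun B C hBC => (hdisj hBC).preimage ψ, Finset.sum_mul, ← hn]
    exact Finset.sum_congr rfl fun B _ =>
      B.1.countingSeries_halfOpenCone_mul q hv hht hdeg (hfinB B)
  refine exists_polynomial_coe_eq_of_coeff_nonneg (fun m => ?_) fun m hm => ?_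
  · rw [hseries, map_sum]
    exact Finset.sum_nonneg fun B _ => by simp [coeff_countingSeries]
  · rw [hseries, map_sum]
    refine Finset.sum_eq_zero fun B _ => ?_
    have hempty : {g ∈ ψ ⁻¹' B.1.box q | deg g = m} = ∅ := by
      refine Set.eq_empty_of_forall_notMem fun g ⟨hg, hgm⟩ => ?_
      have hlt := SelectedBasis.height_lt_of_mem_box hht hq hg
      rw [hdeg, hgm, hn] at hlt
      norm_cast at hlt
      omega
    rw [coeff_countingSeries, hempty, Set.ncard_empty, Nat.cast_zero]

end LatticePointsOfCones

section Homogenization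

variable {F : Type*} [AddCommGroup F] [Module ℝ F] {s : Set F}

theorem mk_one_mem_hull_of_mem_convexHull {p : F} (hp : p ∈ convexHull ℝ s) :
    ((1 : ℝ), p) ∈ PointedCone.hull ℝ ((fun x => ((1 : ℝ), x)) '' s) := by
  let C := PointedCone.hull ℝ ((fun x => ((1 : ℝ), x)) '' s)
  have hconvex : Convex ℝ {p | ((1 : ℝ), p) ∈ C} := fun x hx y hy a b ha hb hab => by
    simpa [hab] using add_mem (C.smul_mem ha hx) (C.smul_mem hb hy)
  have hsub : s ⊆ {p | ((1 : ℝ), p) ∈ C} := fun x hx => PointedCone.subset_hull ⟨x, hx, rfl⟩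
  exact convexHull_min hsub hconvex hp

theorem mk_mem_hull_image_mk_one_iff (hs : s.Nonempty) {a : ℝ} {x : F} :
    (a, x) ∈ PointedCone.hull ℝ ((fun x => ((1 : ℝ), x)) '' s) ↔
      0 ≤ a ∧ x ∈ a • convexHull ℝ s := by
  constructor
  · intro hx
    refine Submodule.span_induction (p := fun y _ => 0 ≤ y.1 ∧ y.2 ∈ y.1 • convexHull ℝ s)
      ?_ ?_ ?_ ?_ hx
    · rintro _ ⟨x, hx, rfl⟩
      simpa using subset_convexHull ℝ s hx
    · simp [Set.zero_smul_set hs.convexHull]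
    · rintro y z - - ⟨hy, hys⟩ ⟨hz, hzs⟩
      refine ⟨add_nonneg hy hz, ?_⟩
      rw [Prod.fst_add, (convex_convexHull ℝ s).add_smul hy hz]
      exact Set.add_mem_add hys hzs
    · rintro c y - ⟨hy, hys⟩
      refine ⟨mul_nonneg c.2 hy, ?_⟩
      have hcy := Set.smul_mem_smul_set (a := (c : ℝ)) hys
      rwa [smul_smul] at hcy
  · rintro ⟨ha, p, hp, rfl⟩
    simpa using PointedCone.smul_mem _ ha (mk_one_mem_hull_of_mem_convexHull hp)

theorem setOf_mem_hull_image_mk_one_eq {M : Type*} [AddCommGroup M] (φ : M →+ F) (hs : s.Nonempty)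
    (m : ℕ) :
    {g ∈ (Int.castAddHom ℝ).prodMap φ ⁻¹' PointedCone.hull ℝ ((fun x => ((1 : ℝ), x)) '' s) |
        AddMonoidHom.fst ℤ M g = m} =
      Prod.mk (m : ℤ) '' {x | φ x ∈ (m : ℝ) • convexHull ℝ s} := by
  ext ⟨a, x⟩
  have hmem : (Int.castAddHom ℝ).prodMap φ (a, x) ∈
      PointedCone.hull ℝ ((fun x => ((1 : ℝ), x)) '' s) ↔
        (0 : ℝ) ≤ a ∧ φ x ∈ (a : ℝ) • convexHull ℝ s :=
    mk_mem_hull_image_mk_one_iff hs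
  constructor
  · rintro ⟨hx, rfl⟩
    exact ⟨x, by simpa using (hmem.1 hx).2, rfl⟩
  · rintro ⟨x, hx, ⟨⟩⟩
    exact ⟨hmem.2 ⟨by simp, by simpa using hx⟩, rfl⟩

theorem span_image_mk_one {p : F} (hp : p ∈ s) :
    Submodule.span ℝ ((fun x => ((1 : ℝ), x)) '' s) =
      Submodule.span ℝ {((1 : ℝ), p)} ⊔ (vectorSpan ℝ s).map (LinearMap.inr ℝ ℝ F) := by
  rw [vectorSpan_eq_span_vsub_set_right ℝ hp, Submodule.map_span, ← Submodule.span_union]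
  refine (Submodule.span_le.2 ?_).antisymm (Submodule.span_le.2 (Set.union_subset ?_ ?_))
  · rintro _ ⟨x, hx, rfl⟩
    have hadd : ((1 : ℝ), x) = ((1 : ℝ), p) + LinearMap.inr ℝ ℝ F (x -ᵥ p) := by simp
    change ((1 : ℝ), x) ∈ Submodule.span ℝ _
    rw [hadd]
    exact add_mem (Submodule.subset_span (Or.inl rfl))
      (Submodule.subset_span (Or.inr ⟨_, ⟨x, hx, rfl⟩, rfl⟩))
  · exact Set.singleton_subset_iff.2 (Submodule.subset_span ⟨p, hp, rfl⟩)
  · rintro _ ⟨_, ⟨x, hx, rfl⟩, rfl⟩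
    have hsub : LinearMap.inr ℝ ℝ F (x -ᵥ p) = ((1 : ℝ), x) - ((1 : ℝ), p) := by simp
    rw [SetLike.mem_coe, hsub]
    exact sub_mem (Submodule.subset_span ⟨x, hx, rfl⟩) (Submodule.subset_span ⟨p, hp, rfl⟩)

theorem finrank_span_image_mk_one [FiniteDimensional ℝ (vectorSpan ℝ s)] (hs : s.Nonempty) :
    Module.finrank ℝ (Submodule.span ℝ ((fun x => ((1 : ℝ), x)) '' s)) =
      Module.finrank ℝ (vectorSpan ℝ s) + 1 := by
  obtain ⟨p, hp⟩ := hs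
  have hdisj :
      Submodule.span ℝ {((1 : ℝ), p)} ⊓ (vectorSpan ℝ s).map (LinearMap.inr ℝ ℝ F) = ⊥ := by
    refine (Submodule.eq_bot_iff _).2 ?_
    rintro _ ⟨hx, y, -, rfl⟩
    obtain ⟨a, ha⟩ := Submodule.mem_span_singleton.1 hx
    have ha₀ : a = 0 := by simpa using congrArg Prod.fst ha
    rw [← ha, ha₀, zero_smul]
  have hsum := Submodule.finrank_sup_add_finrank_inf_eq (Submodule.span ℝ {((1 : ℝ), p)})
    ((vectorSpan ℝ s).map (LinearMap.inr ℝ ℝ F))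
  rw [← span_image_mk_one hp, hdisj, finrank_bot, add_zero, finrank_span_singleton (by simp),
    ← (Submodule.equivMapOfInjective _ LinearMap.inr_injective (vectorSpan ℝ s)).finrank_eq] at hsum
  rw [hsum, add_comm]

open Filter in
theorem finite_setOf_intCast_mem_of_isBounded {ι : Type*} [Finite ι] {s : Set (ι → ℝ)}
    (hs : Bornology.IsBounded s) : {x : ι → ℤ | (fun i => (x i : ℝ)) ∈ s}.Finite := by
  have hlim : Tendsto (fun (x : ι → ℤ) i => (x i : ℝ)) cofinite (cocompact (ι → ℝ)) := by
    simpa only [coprodᵢ_cofinite, coprodᵢ_cocompact] using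
      Tendsto.pi_map_coprodᵢ fun _ : ι => Int.tendsto_coe_cofinite
  have := Fintype.ofFinite ι
  rw [← Metric.cobounded_eq_cocompact] at hlim
  have hcompl : sᶜ ∈ Bornology.cobounded (ι → ℝ) := hs
  simpa [Set.preimage, Set.compl_ofPred] using hlim hcompl

end Homogenization

theorem ehrhart_series_h_star_general {M F : Type*} [AddCommGroup M] [AddCommGroup F]
    [Module ℝ F] (φ : M →+ F) {V : Set M} (hV : V.Nonempty) (hVfin : V.Finite)
    (hfin : ∀ m : ℕ, {x | φ x ∈ (m : ℝ) • convexHull ℝ (φ '' V)}.Finite) :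
    ∃ h : Polynomial ℤ, h.natDegree ≤ Module.finrank ℝ (vectorSpan ℝ (φ '' V)) ∧
      (∀ i, 0 ≤ h.coeff i) ∧
      PowerSeries.mk (fun m : ℕ => ({x | φ x ∈ (m : ℝ) • convexHull ℝ (φ '' V)}.ncard : ℤ)) *
        (1 - PowerSeries.X) ^ (Module.finrank ℝ (vectorSpan ℝ (φ '' V)) + 1) =
          (h : PowerSeries ℤ) := by
  let v : V → ℝ × F := fun x => (1, φ x)
  have hrange : Set.range v = (fun y => ((1 : ℝ), y)) '' (φ '' V) := by
    rw [Set.image_image, Set.image_eq_range]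
  have hslice (m : ℕ) := setOf_mem_hull_image_mk_one_eq φ (hV.image φ) m
  rw [← hrange] at hslice
  have := hV.to_subtype
  have := hVfin.to_subtype
  have := finiteDimensional_vectorSpan_of_finite ℝ (hVfin.image φ)
  have hseries : PowerSeries.mk
      (fun m : ℕ => ({x | φ x ∈ (m : ℝ) • convexHull ℝ (φ '' V)}.ncard : ℤ)) =
        countingSeries (AddMonoidHom.fst ℤ M)
          ((Int.castAddHom ℝ).prodMap φ ⁻¹' PointedCone.hull ℝ (Set.range v)) := by
    ext m
    rw [coeff_countingSeries, PowerSeries.coeff_mk, hslice,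
      Set.ncard_image_of_injective _ (Prod.mk_right_injective _)]
  rw [hseries]
  exact exists_polynomial_countingSeries_hull_mul (ht := LinearMap.fst ℝ ℝ F)
    (e := fun x : V => ((1 : ℤ), x.1)) (fun x => by simp [v]) (fun _ => rfl) (fun _ => rfl)
    (fun m => (hslice m).symm ▸ (hfin m).image _)
    (hrange ▸ finrank_span_image_mk_one (hV.image φ))

/-- **Ehrhart series and Stanley nonnegativity.**  Let `P ⊆ ℝ^r` be a lattice polytope of
dimension `n` (the convex hull of a nonempty finite set of integer points), with Ehrhart
counting function `f_P(m) = #(mP ∩ ℤ^r)`.  Then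
`∑_{m ≥ 0} f_P(m) t^m = h*_P(t) / (1−t)^(n+1)` for a polynomial `h*_P` of degree at most `n`
with nonnegative integer coefficients. -/
theorem ehrhart_series_h_star {r n : ℕ} (V : Finset (Fin r → ℤ)) (hV : V.Nonempty)
    (P : Set (Fin r → ℝ))
    (hP : P = convexHull ℝ ((fun v : Fin r → ℤ => fun i => (v i : ℝ)) '' ↑V))
    (hdim : Module.finrank ℝ (vectorSpan ℝ P) = n)
    (f : ℕ → ℕ)
    (hf : ∀ m : ℕ, f m = Set.ncard {x : Fin r → ℤ | (fun i => (x i : ℝ)) ∈ (m : ℝ) • P}) :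
    ∃ h : Polynomial ℤ, h.natDegree ≤ n ∧ (∀ i, 0 ≤ h.coeff i) ∧
      PowerSeries.mk (fun m => (f m : ℤ)) * (1 - PowerSeries.X) ^ (n + 1)
        = (h : PowerSeries ℤ) := by
  let φ : (Fin r → ℤ) →+ (Fin r → ℝ) := (Int.castAddHom ℝ).compLeft (Fin r)
  have hbdd : Bornology.IsBounded P := by
    rw [hP, isBounded_convexHull]
    exact (V.finite_toSet.image _).isBounded
  have hspan : vectorSpan ℝ P = vectorSpan ℝ (φ '' V) := by
    rw [← direction_affineSpan, hP, affineSpan_convexHull, direction_affineSpan]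
    rfl
  have hfin (m : ℕ) : {x | φ x ∈ (m : ℝ) • P}.Finite :=
    finite_setOf_intCast_mem_of_isBounded (hbdd.smul₀ (m : ℝ))
  subst hP
  obtain rfl : f = _ := funext hf
  rw [← hdim, hspan]
  exact ehrhart_series_h_star_general φ hV V.finite_toSet hfin
end

section
/- Let n : V → V be a nilpotent endomorphism of a finite-dimensional vector space with n^{m+1} = 0. Then there exists a unique increasing filtration 0 ⊆ W_0 ⊆ W_1 ⊆ ⋯ ⊆ W_{2m} = V such that n(W_k) ⊆ W_{k−2} for all k and the induced map n^k : Gr^W_{m+k} → Gr^W_{m−k} is an isomorphism for all k ≥ 0. -/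
/-!
The filtration `W_k = ∑ j, n ^ j (ker n ^ (k - c + 2 j + 1))` has all the required properties
relative to the centre `c`: surjectivity of `n ^ k` on graded pieces can be read off term by term,
and injectivity follows because `n ^ k x ∈ W_{c - k - 1} = n ^ (k + 1) W_{c + k + 1}` writes `x` as
an element of `ker n ^ k` plus an element of `n W_{c + k + 1}`.

For uniqueness, two such filtrations are compared from the outside in: once the inclusion `W ≤ W'`
is known in degrees `c + k` and `c - k - 1`, injectivity for `W'` gives it in degree `c + k - 1`,
and surjectivity for `W` gives it in degree `c - k`.
-/

section Semiring

variable {R M : Type*} [Semiring R] [AddCommMonoid M] [Module R M] {n : Module.End R M}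

lemma map_pow_le_of_map_le {W : ℤ → Submodule R M} {d : ℤ}
    (hW : ∀ k, (W k).map n ≤ W (k - d)) (j : ℕ) {k l : ℤ} (hl : l = k - j * d) :
    (W k).map (n ^ j) ≤ W l := by
  subst hl
  induction j with
  | zero => simp [Module.End.one_eq_id]
  | succ j ih =>
    calc (W k).map (n ^ (j + 1)) = ((W k).map (n ^ j)).map n := by
          rw [pow_succ', Module.End.mul_eq_comp, Submodule.map_comp]
      _ ≤ (W (k - j * d)).map n := Submodule.map_mono ih
      _ ≤ W (k - j * d - d) := hW _
      _ = W (k - (j + 1 : ℕ) * d) := by congr 1; push_cast; ring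

/-- The monodromy weight filtration of `n` centred at `c`, as an explicit sum of images of kernels.
A negative exponent `k - c + 2 * j + 1` is truncated to `0`, so that its term vanishes. -/
def monodromyWeightFiltration (n : Module.End R M) (c k : ℤ) : Submodule R M :=
  ⨆ j : ℕ, (LinearMap.ker (n ^ (k - c + 2 * j + 1).toNat)).map (n ^ j)

lemma monodromyWeightFiltration_le_iff {c k : ℤ} {P : Submodule R M} :
    monodromyWeightFiltration n c k ≤ P ↔
      ∀ (j : ℕ) (y : M), (n ^ (k - c + 2 * j + 1).toNat) y = 0 → (n ^ j) y ∈ P := by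
  simp only [monodromyWeightFiltration, iSup_le_iff, Submodule.map_le_iff_le_comap]
  rfl

lemma pow_apply_mem_monodromyWeightFiltration {c k : ℤ} {i j : ℕ} {y : M}
    (hy : (n ^ i) y = 0) (hi : i ≤ (k - c + 2 * j + 1).toNat) :
    (n ^ j) y ∈ monodromyWeightFiltration n c k :=
  monodromyWeightFiltration_le_iff.mp le_rfl j y (Module.End.pow_map_zero_of_le hi hy)

lemma ker_pow_le_monodromyWeightFiltration {c k : ℤ} {i : ℕ} (hi : c + i - 1 ≤ k) :
    LinearMap.ker (n ^ i) ≤ monodromyWeightFiltration n c k := fun _ hx =>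
  pow_apply_mem_monodromyWeightFiltration (j := 0) hx (by omega)

lemma monodromyWeightFiltration_eq_top {N : ℕ} (hn : n ^ N = 0) {c k : ℤ} (hk : c + N - 1 ≤ k) :
    monodromyWeightFiltration n c k = ⊤ :=
  top_le_iff.mp <| (LinearMap.ker_eq_top.mpr hn).ge.trans (ker_pow_le_monodromyWeightFiltration hk)

lemma monodromyWeightFiltration_eq_bot {N : ℕ} (hn : n ^ N = 0) {c k : ℤ} (hk : k ≤ c - N) :
    monodromyWeightFiltration n c k = ⊥ := by
  refine le_bot_iff.mp (monodromyWeightFiltration_le_iff.mpr fun j y hy => ?_)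
  rw [Submodule.mem_bot]
  obtain hj | hj := lt_or_ge j N
  · exact Module.End.pow_map_zero_of_le (by omega) hy
  · rw [pow_eq_zero_of_le hj hn, LinearMap.zero_apply]

lemma monodromyWeightFiltration_mono (n : Module.End R M) (c : ℤ) :
    Monotone (monodromyWeightFiltration n c) := fun _ _ hkl =>
  monodromyWeightFiltration_le_iff.mpr fun _ _ hy =>
    pow_apply_mem_monodromyWeightFiltration hy (by omega)

lemma map_monodromyWeightFiltration_le (n : Module.End R M) (c k : ℤ) :
    (monodromyWeightFiltration n c k).map n ≤ monodromyWeightFiltration n c (k - 2) := by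
  refine Submodule.map_le_iff_le_comap.mpr (monodromyWeightFiltration_le_iff.mpr fun j y hy => ?_)
  rw [Submodule.mem_comap, ← Module.End.mul_apply, ← pow_succ']
  exact pow_apply_mem_monodromyWeightFiltration hy (by omega)

lemma map_pow_monodromyWeightFiltration (n : Module.End R M) (c : ℤ) (k : ℕ) :
    (monodromyWeightFiltration n c (c + k)).map (n ^ k) =
      monodromyWeightFiltration n c (c - k) := by
  refine le_antisymm
    (map_pow_le_of_map_le (map_monodromyWeightFiltration_le n c) k (by omega))
    (monodromyWeightFiltration_le_iff.mpr fun j y hy => ?_)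
  obtain hj | hj := lt_or_ge j k
  · rw [Module.End.pow_map_zero_of_le (by omega) hy]
    exact zero_mem _
  · obtain ⟨i, rfl⟩ := Nat.exists_eq_add_of_le hj
    rw [pow_add, Module.End.mul_apply]
    exact Submodule.mem_map_of_mem (pow_apply_mem_monodromyWeightFiltration hy (by omega))

end Semiring

section Ring

variable {R M : Type*} [Ring R] [AddCommGroup M] [Module R M] {n : Module.End R M} {c : ℤ}

/-- `W` is a weight filtration of `n` centred at `c`: an increasing filtration which `n` lowers by
two steps and for which `n ^ k` induces isomorphisms `Gr_{c + k} ≃ Gr_{c - k}`. The isomorphisms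
are encoded inside `M`, by surjectivity and triviality of the kernel modulo the previous step.
The filtration is not required to be finite. -/
structure IsMonodromyWeightFiltration (n : Module.End R M) (c : ℤ) (W : ℤ → Submodule R M) :
    Prop where
  monotone : Monotone W
  map_le (k : ℤ) : (W k).map n ≤ W (k - 2)
  gr_surjective (k : ℕ) : W (c - k) ≤ (W (c + k)).map (n ^ k) ⊔ W (c - k - 1)
  gr_injective (k : ℕ) : ∀ x ∈ W (c + k), (n ^ k) x ∈ W (c - k - 1) → x ∈ W (c + k - 1)

lemma mem_monodromyWeightFiltration_of_pow_apply_mem {k : ℕ} {x : M}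
    (hx : (n ^ k) x ∈ monodromyWeightFiltration n c (c - k - 1)) :
    x ∈ monodromyWeightFiltration n c (c + k - 1) := by
  rw [show c - k - 1 = c - (k + 1 : ℕ) by omega, ← map_pow_monodromyWeightFiltration] at hx
  obtain ⟨z, hz, hzx⟩ := hx
  have sub_mem_ker : x - n z ∈ LinearMap.ker (n ^ k) := by
    rw [LinearMap.mem_ker, map_sub, ← hzx, pow_succ, Module.End.mul_apply, sub_self]
  have apply_mem : n z ∈ monodromyWeightFiltration n c (c + k - 1) := by
    rw [show c + k - 1 = c + (k + 1 : ℕ) - 2 by omega]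
    exact map_monodromyWeightFiltration_le n c _ (Submodule.mem_map_of_mem hz)
  rw [← sub_add_cancel x (n z)]
  exact add_mem (ker_pow_le_monodromyWeightFiltration le_rfl sub_mem_ker) apply_mem

theorem isMonodromyWeightFiltration_monodromyWeightFiltration (n : Module.End R M) (c : ℤ) :
    IsMonodromyWeightFiltration n c (monodromyWeightFiltration n c) where
  monotone := monodromyWeightFiltration_mono n c
  map_le := map_monodromyWeightFiltration_le n c
  gr_surjective k := le_sup_of_le_left (map_pow_monodromyWeightFiltration n c k).ge
  gr_injective _ _ _ := mem_monodromyWeightFiltration_of_pow_apply_mem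

namespace IsMonodromyWeightFiltration

variable {W W' : ℤ → Submodule R M}

lemma le_above_of_le (h : IsMonodromyWeightFiltration n c W)
    (h' : IsMonodromyWeightFiltration n c W') {k : ℕ} (above : W (c + k) ≤ W' (c + k))
    (below : W (c - k - 1) ≤ W' (c - k - 1)) : W (c + k - 1) ≤ W' (c + k - 1) := by
  intro x hx
  have pow_apply_mem : (n ^ k) x ∈ W (c - k - 1) :=
    map_pow_le_of_map_le h.map_le k (by omega) (Submodule.mem_map_of_mem hx)
  exact h'.gr_injective k x (above (h.monotone (by omega) hx)) (below pow_apply_mem)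

lemma le_below_of_le (h : IsMonodromyWeightFiltration n c W)
    (h' : IsMonodromyWeightFiltration n c W') {k : ℕ} (above : W (c + k) ≤ W' (c + k))
    (below : W (c - k - 1) ≤ W' (c - k - 1)) : W (c - k) ≤ W' (c - k) :=
  calc W (c - k) ≤ (W (c + k)).map (n ^ k) ⊔ W (c - k - 1) := h.gr_surjective k
    _ ≤ (W' (c + k)).map (n ^ k) ⊔ W' (c - k - 1) := sup_le_sup (Submodule.map_mono above) below
    _ ≤ W' (c - k) :=
      sup_le (map_pow_le_of_map_le h'.map_le k (by omega)) (h'.monotone (by omega))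

theorem le_of_eq_bot_of_eq_top (h : IsMonodromyWeightFiltration n c W)
    (h' : IsMonodromyWeightFiltration n c W') {a b : ℤ} (ha : W a = ⊥) (hb : W' b = ⊤) :
    W ≤ W' := by
  have le_bounds (k : ℕ) : W (c + k) ≤ W' (c + k) ∧ W (c - k - 1) ≤ W' (c - k - 1) := by
    obtain ⟨N, hkN, haN, hbN⟩ : ∃ N : ℕ, k ≤ N ∧ c - N - 1 ≤ a ∧ b ≤ c + N :=
      ⟨k + (c - a).toNat + (b - c).toNat, by omega, by omega, by omega⟩
    induction hkN using Nat.decreasingInduction with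
    | self =>
      exact ⟨le_top.trans (hb.ge.trans (h'.monotone hbN)),
        (h.monotone haN).trans (ha.le.trans bot_le)⟩
    | of_succ k _ ih =>
      obtain ⟨above, below⟩ := ih
      rw [show c + k = c + (k + 1 : ℕ) - 1 by omega, show c - k - 1 = c - (k + 1 : ℕ) by omega]
      exact ⟨h.le_above_of_le h' above below, h.le_below_of_le h' above below⟩
  intro k
  obtain hk | hk := le_or_gt c k
  · obtain ⟨i, rfl⟩ := Int.le.dest hk
    exact (le_bounds i).1
  · obtain ⟨i, rfl⟩ : ∃ i : ℕ, k = c - i - 1 := ⟨(c - k - 1).toNat, by omega⟩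
    exact (le_bounds i).2

end IsMonodromyWeightFiltration

end Ring

theorem monodromy_weight_filtration_general {R M : Type*} [Ring R] [AddCommGroup M] [Module R M]
    (m : ℕ) (n : Module.End R M) (hn : n ^ (m + 1) = 0) :
    ∃! W : ℤ → Submodule R M,
      Monotone W ∧
      (∀ k : ℤ, k < 0 → W k = ⊥) ∧
      (∀ k : ℤ, 2 * (m : ℤ) ≤ k → W k = ⊤) ∧
      (∀ k : ℤ, (W k).map n ≤ W (k - 2)) ∧
      (∀ k : ℕ,
        (W ((m : ℤ) - k) ≤ (W ((m : ℤ) + k)).map (n ^ k) ⊔ W ((m : ℤ) - k - 1)) ∧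
        (∀ x ∈ W ((m : ℤ) + k), (n ^ k) x ∈ W ((m : ℤ) - k - 1) → x ∈ W ((m : ℤ) + k - 1))) := by
  have isWeight := isMonodromyWeightFiltration_monodromyWeightFiltration n m
  have eq_bot (k : ℤ) (hk : k < 0) : monodromyWeightFiltration n m k = ⊥ :=
    monodromyWeightFiltration_eq_bot hn (by omega)
  have eq_top (k : ℤ) (hk : 2 * (m : ℤ) ≤ k) : monodromyWeightFiltration n m k = ⊤ :=
    monodromyWeightFiltration_eq_top hn (by omega)
  refine ⟨monodromyWeightFiltration n m, ⟨isWeight.monotone, eq_bot, eq_top, isWeight.map_le,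
    fun k => ⟨isWeight.gr_surjective k, isWeight.gr_injective k⟩⟩, ?_⟩
  rintro W ⟨mono, bot, top, map_le, gr⟩
  have hW : IsMonodromyWeightFiltration n m W :=
    ⟨mono, map_le, fun k => (gr k).1, fun k => (gr k).2⟩
  exact le_antisymm
    (hW.le_of_eq_bot_of_eq_top isWeight (bot (-1) (by omega)) (eq_top _ le_rfl))
    (isWeight.le_of_eq_bot_of_eq_top hW (eq_bot (-1) (by omega)) (top _ le_rfl))

/-- **Existence and uniqueness of the monodromy weight filtration.**  Let `n : V → V` be a
nilpotent endomorphism of a finite-dimensional vector space with `n^(m+1) = 0`.  Then there is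
a unique increasing filtration `0 ⊆ W₀ ⊆ W₁ ⊆ ⋯ ⊆ W_{2m} = V` (indexed by `ℤ`, with
`W_k = 0` for `k < 0` and `W_k = V` for `k ≥ 2m`) such that `n(W_k) ⊆ W_{k−2}` for all `k` and
the induced map `n^k : Gr^W_{m+k} → Gr^W_{m−k}` is an isomorphism for all `k ≥ 0` (expressed
by surjectivity and injectivity on the graded pieces). -/
theorem monodromy_weight_filtration {K V : Type*} [Field K] [AddCommGroup V] [Module K V]
    [FiniteDimensional K V] (m : ℕ) (n : Module.End K V) (hn : n ^ (m + 1) = 0) :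
    ∃! W : ℤ → Submodule K V,
      Monotone W ∧
      (∀ k : ℤ, k < 0 → W k = ⊥) ∧
      (∀ k : ℤ, 2 * (m : ℤ) ≤ k → W k = ⊤) ∧
      (∀ k : ℤ, (W k).map n ≤ W (k - 2)) ∧
      (∀ k : ℕ,
        (W ((m : ℤ) - k) ≤ (W ((m : ℤ) + k)).map (n ^ k) ⊔ W ((m : ℤ) - k - 1)) ∧
        (∀ x ∈ W ((m : ℤ) + k), (n ^ k) x ∈ W ((m : ℤ) - k - 1) → x ∈ W ((m : ℤ) + k - 1))) := by
  exact monodromy_weight_filtration_general m n hn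
end
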